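/- arXiv:2604.14995 — 11 statements merged into one kernel-verified Lean document; each statement's English description precedes it below -/
import Mathlib

section
/- Let U be a D×D unitary complex matrix whose spectrum consists of exactly d ≥ 2 distinct eigenvalues e^{iφ_1}, …, e^{iφ_d} with each φ_k ∈ [0, 2π). Then for every ε with 0 < ε ≤ 1/2 there exists a positive integer m_r with m_r ≤ (π / max_{j,k} R(φ_j, φ_k)) · (2⌈π/ε⌉)^(d−1) such that: (i) for every unit vector ψ ∈ ℂ^D, 1 − |⟨ψ, U^{m_r} ψ⟩|² ≤ ε², and (ii) there exist a unit vector φ ∈ ℂ^D and a positive integer m′ ≤ m_r such that 1 − |⟨φ, U^{m′} φ⟩|² > ε². -/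
open Matrix Real

/-- Simultaneous Dirichlet approximation. -/
theorem exists_nat_simultaneous_approx (n Q : ℕ) (hQ : 0 < Q) (α : Fin n → ℝ) :
    ∃ m : ℕ, 0 < m ∧ m ≤ Q ^ n ∧ ∀ k, ∃ z : ℤ, |m * α k - z| ≤ 1 / Q := by
  have hQ' : (0 : ℝ) < Q := by exact_mod_cast hQ
  have hfl (x : ℝ) : ⌊Int.fract x * Q⌋₊ < Q := by
    rw [Nat.floor_lt (by have := Int.fract_nonneg x; positivity)]
    nlinarith [Int.fract_lt_one x]
  let f : Fin (Q ^ n + 1) → Fin n → Fin Q := fun j k => ⟨⌊Int.fract (j * α k) * Q⌋₊, hfl _⟩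
  obtain ⟨i, j, hne, hij⟩ := Fintype.exists_ne_map_eq_of_card_lt f (by simp)
  wlog hlt : i < j generalizing i j
  · exact this j i hne.symm hij.symm (lt_of_le_of_ne (not_lt.1 hlt) hne.symm)
  have hlt' : (i : ℕ) < j := hlt
  refine ⟨j - i, by omega, by omega, fun k => ⟨⌊j * α k⌋ - ⌊i * α k⌋, ?_⟩⟩
  have h := congrArg Fin.val (congrFun hij k)
  simp only [f] at h
  have h1 : (⌊Int.fract (i * α k) * Q⌋₊ : ℝ) = ⌊Int.fract (j * α k) * Q⌋₊ := by rw [h]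
  have a1 := Nat.floor_le (a := Int.fract (i * α k) * Q)
    (by have := Int.fract_nonneg (i * α k); positivity)
  have a2 := Nat.floor_le (a := Int.fract (j * α k) * Q)
    (by have := Int.fract_nonneg (j * α k); positivity)
  have a3 := Nat.lt_floor_add_one (Int.fract (i * α k) * Q)
  have a4 := Nat.lt_floor_add_one (Int.fract (j * α k) * Q)
  rw [Nat.cast_sub hlt'.le]
  push_cast
  have e : ((j : ℝ) - i) * α k - (⌊j * α k⌋ - ⌊i * α k⌋) =
      Int.fract (j * α k) - Int.fract (i * α k) := by
    simp only [Int.fract]; ring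
  rw [e, le_div_iff₀ hQ', ← abs_of_pos hQ', ← abs_mul, sub_mul, abs_le]
  constructor <;> linarith

open scoped Matrix.Norms.L2Operator MatrixOrder ComplexOrder in
/-- A lower bound for `Re (c z ^ M)` on the spectrum of a unitary matrix bounds the numerical range
of `c • U ^ M`. -/
theorem le_re_mul_dotProduct_pow_mulVec {ι : Type*} [Fintype ι] [DecidableEq ι] {U : Matrix ι ι ℂ}
    (hU : U ∈ Matrix.unitaryGroup ι ℂ) (c : ℂ) (M : ℕ) (a : ℝ)
    (h : ∀ z ∈ spectrum ℂ U, a ≤ (c * z ^ M).re) (ψ : ι → ℂ) (hψ : star ψ ⬝ᵥ ψ = 1) :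
    a ≤ (c * (star ψ ⬝ᵥ (U ^ M *ᵥ ψ))).re := by
  have hn : IsStarNormal U := ⟨by
    rw [commute_iff_eq, (Unitary.mem_iff.1 hU).1, (Unitary.mem_iff.1 hU).2]⟩
  have hV : cfc (fun z : ℂ => c * z ^ M) U = c • U ^ M := by
    rw [cfc_const_mul c (fun z : ℂ => z ^ M) U, cfc_pow_id U M]
  have hW : cfc (fun z : ℂ => c * z ^ M + star (c * z ^ M) - (2 * a : ℝ)) U =
      c • U ^ M + star (c • U ^ M) - algebraMap ℂ _ ((2 * a : ℝ) : ℂ) := by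
    rw [cfc_sub _ _ U, cfc_add U _ _, cfc_star, hV, cfc_const _ U]
  have hpos : 0 ≤ cfc (fun z : ℂ => c * z ^ M + star (c * z ^ M) - (2 * a : ℝ)) U := by
    refine cfc_nonneg fun z hz => ?_
    have e : c * z ^ M + star (c * z ^ M) - ((2 * a : ℝ) : ℂ) =
        ((2 * (c * z ^ M).re - 2 * a : ℝ) : ℂ) := by
      rw [Complex.star_def, Complex.add_conj]; push_cast; ring
    rw [e]
    exact Complex.zero_le_real.2 (by linarith [h z hz])
  rw [hW, Matrix.nonneg_iff_posSemidef] at hpos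
  have := hpos.re_dotProduct_nonneg ψ
  rw [sub_mulVec, add_mulVec, dotProduct_sub, dotProduct_add, Algebra.algebraMap_eq_smul_one,
    smul_mulVec, smul_mulVec, one_mulVec, dotProduct_smul, dotProduct_smul, hψ] at this
  have e : star ψ ⬝ᵥ (star (c • U ^ M) *ᵥ ψ) = star (c * (star ψ ⬝ᵥ (U ^ M *ᵥ ψ))) := by
    rw [Matrix.star_eq_conjTranspose, ← smul_eq_mul, ← dotProduct_smul, ← smul_mulVec,
      star_dotProduct, star_mulVec, conjTranspose_conjTranspose, dotProduct_mulVec]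
  rw [e] at this
  simp at this ⊢
  linarith

theorem exists_unit_eigenvector {ι : Type*} [Fintype ι] [DecidableEq ι] {U : Matrix ι ι ℂ} {z : ℂ}
    (hz : z ∈ spectrum ℂ U) : ∃ v : ι → ℂ, star v ⬝ᵥ v = 1 ∧ U *ᵥ v = z • v := by
  rw [← Matrix.spectrum_toLin', ← Module.End.hasEigenvalue_iff_mem_spectrum] at hz
  obtain ⟨v, hv⟩ := hz.exists_hasEigenvector
  have hv1 : U *ᵥ v = z • v := by simpa using hv.apply_eq_smul
  have e : star v ⬝ᵥ v = ((‖WithLp.toLp 2 v‖ ^ 2 : ℝ) : ℂ) := by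
    rw [EuclideanSpace.norm_sq_eq]
    simp [dotProduct, Complex.conj_mul']
  have hr : 0 < ‖WithLp.toLp 2 v‖ := by
    rw [norm_pos_iff]; simpa using hv.2
  refine ⟨((‖WithLp.toLp 2 v‖⁻¹ : ℝ) : ℂ) • v, ?_, ?_⟩
  · rw [star_smul, smul_dotProduct, dotProduct_smul, e]
    simp only [Complex.star_def, Complex.conj_ofReal, smul_eq_mul, ← Complex.ofReal_mul]
    norm_cast
    field_simp
  · rw [mulVec_smul, hv1, smul_comm]

theorem dotProduct_eq_zero_of_eigenvalue_ne {ι : Type*} [Fintype ι] [DecidableEq ι]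
    {U : Matrix ι ι ℂ}
    (hU : U ∈ Matrix.unitaryGroup ι ℂ) {v w : ι → ℂ} {x y : ℂ} (hv : U *ᵥ v = x • v)
    (hw : U *ᵥ w = y • w) (hx : ‖x‖ = 1) (hxy : x ≠ y) : star v ⬝ᵥ w = 0 := by
  have h : star (U *ᵥ v) ⬝ᵥ (U *ᵥ w) = star v ⬝ᵥ w := by
    rw [star_mulVec, ← dotProduct_mulVec, mulVec_mulVec, ← Matrix.star_eq_conjTranspose,
      (Unitary.mem_iff.1 hU).1, one_mulVec]
  rw [hv, hw, star_smul, smul_dotProduct, dotProduct_smul, smul_eq_mul, smul_eq_mul,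
    ← mul_assoc] at h
  by_contra h0
  have h1 : star x * y = 1 := mul_right_cancel₀ h0 (by rw [h, one_mul])
  have h2 : x * star x = 1 := by rw [Complex.star_def, Complex.mul_conj']; simp [hx]
  apply hxy
  calc x = x * (star x * y) := by rw [h1, mul_one]
    _ = y := by rw [← mul_assoc, h2, one_mul]

theorem pow_mulVec_of_eigenvector {ι : Type*} [Fintype ι] [DecidableEq ι] {U : Matrix ι ι ℂ}
    {v : ι → ℂ} {x : ℂ} (hv : U *ᵥ v = x • v) (n : ℕ) : U ^ n *ᵥ v = x ^ n • v := by
  induction n with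
  | zero => simp
  | succ n ih =>
    rw [pow_succ, ← mulVec_mulVec, hv, mulVec_smul, ih, smul_smul, pow_succ, mul_comm]

theorem exists_unit_superposition {ι : Type*} [Fintype ι] [DecidableEq ι] {U : Matrix ι ι ℂ}
    (hU : U ∈ Matrix.unitaryGroup ι ℂ) {x y : ℂ} (hx : x ∈ spectrum ℂ U) (hy : y ∈ spectrum ℂ U)
    (hx1 : ‖x‖ = 1) (hxy : x ≠ y) :
    ∃ χ : ι → ℂ, star χ ⬝ᵥ χ = 1 ∧ ∀ n : ℕ, star χ ⬝ᵥ (U ^ n *ᵥ χ) = (x ^ n + y ^ n) / 2 := by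
  obtain ⟨v, hv, hUv⟩ := exists_unit_eigenvector hx
  obtain ⟨w, hw, hUw⟩ := exists_unit_eigenvector hy
  have o1 := dotProduct_eq_zero_of_eigenvalue_ne hU hUv hUw hx1 hxy
  have o2 : star w ⬝ᵥ v = 0 := by rw [star_dotProduct, o1, star_zero]
  have hs : (((√2)⁻¹ : ℝ) : ℂ) * (((√2)⁻¹ : ℝ) : ℂ) = 1 / 2 := by
    rw [← Complex.ofReal_mul, ← mul_inv, Real.mul_self_sqrt (by norm_num)]; norm_num
  have key (n : ℕ) : star ((((√2)⁻¹ : ℝ) : ℂ) • (v + w)) ⬝ᵥ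
      (U ^ n *ᵥ ((((√2)⁻¹ : ℝ) : ℂ) • (v + w))) = (x ^ n + y ^ n) / 2 := by
    rw [mulVec_smul, mulVec_add, pow_mulVec_of_eigenvector hUv,
      pow_mulVec_of_eigenvector hUw, star_smul, smul_dotProduct, dotProduct_smul, star_add,
      add_dotProduct, dotProduct_add, dotProduct_add]
    simp only [dotProduct_smul, hv, hw, o1, o2, Complex.star_def, Complex.conj_ofReal, smul_eq_mul]
    rw [← mul_assoc, hs]; ring
  exact ⟨_, by simpa using key 0, key⟩

theorem norm_exp_I_pow_add_exp_I_pow_div_two_sq (a b : ℝ) (n : ℕ) :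
    ‖(Complex.exp (Complex.I * a) ^ n + Complex.exp (Complex.I * b) ^ n) / 2‖ ^ 2 =
      (1 + cos (n * (a - b))) / 2 := by
  have e (t : ℝ) : Complex.exp (Complex.I * t) ^ n =
      ((cos (n * t) : ℝ) : ℂ) + ((sin (n * t) : ℝ) : ℂ) * Complex.I := by
    rw [← Complex.exp_nat_mul, Complex.ofReal_cos, Complex.ofReal_sin, ← Complex.exp_mul_I]
    push_cast
    ring_nf
  have e2 : (Complex.exp (Complex.I * a) ^ n + Complex.exp (Complex.I * b) ^ n) / 2 =
      (((cos (n * a) + cos (n * b)) / 2 : ℝ) : ℂ) +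
        (((sin (n * a) + sin (n * b)) / 2 : ℝ) : ℂ) * Complex.I := by
    rw [e, e]; push_cast; ring
  rw [e2, Complex.sq_norm, Complex.normSq_add_mul_I, mul_sub, cos_sub]
  linear_combination (sin_sq_add_cos_sq (n * a) + sin_sq_add_cos_sq (n * b)) / 4

theorem cos_nat_mul_min_abs (x : ℝ) (n : ℕ) :
    cos (n * min |x| (2 * π - |x|)) = cos (n * x) := by
  have h : cos (n * |x|) = cos (n * x) := by
    rw [← cos_abs (n * x), abs_mul, Nat.abs_cast]
  rcases min_choice |x| (2 * π - |x|) with h' | h' <;> rw [h']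
  · exact h
  · rw [mul_sub, cos_nat_mul_two_pi_sub, h]

theorem cos_le_re_exp_neg_mul_exp_pow {a b δ : ℝ} {M : ℕ} {z : ℤ} (hδ : δ ≤ π)
    (h : |M * (b - a) - z * (2 * π)| ≤ δ) :
    cos δ ≤ (Complex.exp (-(Complex.I * a * M)) * Complex.exp (Complex.I * b) ^ M).re := by
  have e : Complex.exp (-(Complex.I * a * M)) * Complex.exp (Complex.I * b) ^ M =
      Complex.exp ((M * (b - a) : ℝ) * Complex.I) := by
    rw [← Complex.exp_nat_mul, ← Complex.exp_add]
    push_cast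
    ring_nf
  rw [e, Complex.exp_ofReal_mul_I_re, ← cos_sub_int_mul_two_pi (M * (b - a)) z,
    ← cos_abs (_ - z * (2 * π))]
  exact cos_le_cos_of_nonneg_of_le_pi (abs_nonneg _) hδ h

theorem recurrence_time_unitary_dirichlet
    (D d : ℕ) (hd : 2 ≤ d) (U : Matrix (Fin D) (Fin D) ℂ)
    (hU : U ∈ Matrix.unitaryGroup (Fin D) ℂ)
    (φ : Fin d → ℝ) (hφ : ∀ k, 0 ≤ φ k ∧ φ k < 2 * π)
    (hφinj : Function.Injective φ)
    (hspec : spectrum ℂ U = Set.range (fun k => Complex.exp (Complex.I * φ k)))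
    (ε : ℝ) (hε0 : 0 < ε) (hε1 : ε ≤ 1 / 2) :
    ∃ mr : ℕ, 0 < mr ∧
      (mr : ℝ) ≤ (π / ⨆ p : Fin d × Fin d, min |φ p.1 - φ p.2| (2 * π - |φ p.1 - φ p.2|)) *
        (2 * ⌈π / ε⌉ : ℝ) ^ (d - 1) ∧
      (∀ ψ : Fin D → ℂ, star ψ ⬝ᵥ ψ = 1 →
        1 - ‖star ψ ⬝ᵥ ((U ^ mr) *ᵥ ψ)‖ ^ 2 ≤ ε ^ 2) ∧
      (∃ χ : Fin D → ℂ, star χ ⬝ᵥ χ = 1 ∧ ∃ m' : ℕ, 0 < m' ∧ m' ≤ mr ∧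
        1 - ‖star χ ⬝ᵥ ((U ^ m') *ᵥ χ)‖ ^ 2 > ε ^ 2) := by
  obtain ⟨e, rfl⟩ : ∃ e, d = e + 1 := ⟨d - 1, by omega⟩
  have hπ := pi_pos
  set f : Fin (e + 1) × Fin (e + 1) → ℝ :=
    fun p => min |φ p.1 - φ p.2| (2 * π - |φ p.1 - φ p.2|) with hf
  obtain ⟨p, hp⟩ := exists_eq_ciSup_of_finite (f := f)
  have hR : 0 < f p := by
    have h01 : φ 0 ≠ φ (Fin.last e) := hφinj.ne (Fin.ne_of_val_ne (by simp; omega))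
    have hlt : |φ 0 - φ (Fin.last e)| < 2 * π := by
      rw [abs_lt]
      constructor <;> linarith [hφ 0, hφ (Fin.last e)]
    rw [hp]
    refine lt_of_lt_of_le ?_ (le_ciSup (f := f) (Set.finite_range f).bddAbove (0, Fin.last e))
    exact lt_min (abs_pos.2 (sub_ne_zero.2 h01)) (sub_pos.2 hlt)
  have hRπ : f p ≤ π := by
    rcases le_total |φ p.1 - φ p.2| π with h | h
    · exact (min_le_left _ _).trans h
    · exact (min_le_right _ _).trans (by linarith)
  rw [← hp]
  set n := ⌊π / f p⌋₊
  have hn1 : 1 ≤ n := Nat.le_floor (by rw [Nat.cast_one, le_div_iff₀ hR]; linarith)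
  have hnle : (n : ℝ) ≤ π / f p := Nat.floor_le (by positivity)
  have hnR : n * f p ≤ π := (le_div_iff₀ hR).1 hnle
  have hnR2 : π / 2 ≤ n * f p := by
    have h1 : π < (n + 1) * f p := (div_lt_iff₀ hR).1 (Nat.lt_floor_add_one _)
    have h2 : (1 : ℝ) ≤ n := by exact_mod_cast hn1
    nlinarith
  obtain ⟨N, hN⟩ : ∃ N : ℕ, ⌈π / ε⌉ = N :=
    ⟨_, (Int.toNat_of_nonneg (Int.ceil_nonneg (by positivity))).symm⟩
  have hNε : π / ε ≤ N := by
    have := Int.le_ceil (π / ε)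
    rw [hN] at this
    exact_mod_cast this
  have hNr : (0 : ℝ) < N := lt_of_lt_of_le (by positivity) hNε
  have hNpos : 0 < N := by exact_mod_cast hNr
  obtain ⟨m, hm0, hmQ, hm⟩ := exists_nat_simultaneous_approx e (2 * N) (by omega)
    (fun k => n * (φ k.succ - φ 0) / (2 * π))
  refine ⟨n * m, by positivity, ?_, ?_, ?_⟩
  · rw [hN, Nat.add_sub_cancel]
    have : (m : ℝ) ≤ (2 * N) ^ e := by exact_mod_cast hmQ
    push_cast
    gcongr
  · intro ψ hψ
    have hε2 : ε ≤ π / 2 := by linarith [pi_gt_three]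
    have happrox (k : Fin (e + 1)) :
        ∃ z : ℤ, |((n * m : ℕ) : ℝ) * (φ k - φ 0) - z * (2 * π)| ≤ ε := by
      refine Fin.cases ⟨0, by simpa using hε0.le⟩ (fun k => ?_) k
      obtain ⟨z, hz⟩ := hm k
      refine ⟨z, ?_⟩
      have e1 : ((n * m : ℕ) : ℝ) * (φ k.succ - φ 0) - z * (2 * π) =
          (m * (n * (φ k.succ - φ 0) / (2 * π)) - z) * (2 * π) := by
        push_cast
        field_simp
      rw [e1, abs_mul, abs_of_pos (by positivity : 0 < 2 * π)]
      calc _ ≤ 1 / ((2 * N : ℕ) : ℝ) * (2 * π) := by gcongr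
        _ = π / N := by push_cast; field_simp
        _ ≤ ε := by rwa [div_le_iff₀ hNr, ← div_le_iff₀' hε0]
    have hre := le_re_mul_dotProduct_pow_mulVec hU
      (Complex.exp (-(Complex.I * φ 0 * (n * m : ℕ)))) (n * m) (cos ε) (by
        rw [hspec]
        rintro _ ⟨k, rfl⟩
        obtain ⟨z, hz⟩ := happrox k
        exact cos_le_re_exp_neg_mul_exp_pow (by linarith) hz) ψ hψ
    have hnorm := hre.trans (Complex.re_le_norm _)
    have hc : ‖Complex.exp (-(Complex.I * φ 0 * (n * m : ℕ)))‖ = 1 := by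
      rw [Complex.norm_exp]; simp
    rw [norm_mul, hc, one_mul] at hnorm
    have hcos : 0 ≤ cos ε := cos_nonneg_of_neg_pi_div_two_le_of_le (by linarith) hε2
    have hsq := pow_le_pow_left₀ hcos hnorm 2
    have hsin : sin ε ^ 2 ≤ ε ^ 2 :=
      pow_le_pow_left₀ (sin_nonneg_of_nonneg_of_le_pi hε0.le (by linarith)) (sin_le hε0.le) 2
    linarith [sin_sq_add_cos_sq ε]
  · have h2 := cos_nonpos_of_pi_div_two_le_of_le hnR2 (by linarith)
    simp only [hf] at h2
    have hne : Complex.exp (Complex.I * φ p.1) ≠ Complex.exp (Complex.I * φ p.2) := by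
      intro h
      have h1 := norm_exp_I_pow_add_exp_I_pow_div_two_sq (φ p.1) (φ p.2) n
      rw [h, ← cos_nat_mul_min_abs, add_self_div_two, norm_pow, mul_comm Complex.I,
        Complex.norm_exp_ofReal_mul_I] at h1
      norm_num at h1
      linarith
    obtain ⟨χ, hχ, hχn⟩ := exists_unit_superposition hU (hspec ▸ ⟨p.1, rfl⟩) (hspec ▸ ⟨p.2, rfl⟩)
      (by rw [mul_comm, Complex.norm_exp_ofReal_mul_I]) hne
    refine ⟨χ, hχ, n, hn1, Nat.le_mul_of_pos_right n hm0, ?_⟩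
    rw [hχn, norm_exp_I_pow_add_exp_I_pow_div_two_sq, ← cos_nat_mul_min_abs]
    nlinarith
end

section
/- Let d ≥ 2 and let α_1, …, α_d be distinct real numbers, and let N be a positive integer. Then there exist integers l_1, …, l_d and an integer q with 1 ≤ q ≤ (2N)^(d−1) such that |(α_i − α_j)·q − (l_i − l_j)| < 1/N for all i, j ∈ {1, …, d}. -/
/-- Dirichlet's simultaneous approximation theorem. -/
theorem exists_int_simultaneous_approx {ι : Type*} [Fintype ι] (β : ι → ℝ) {M : ℕ} (hM : 0 < M) :
    ∃ (l : ι → ℤ) (q : ℤ), 1 ≤ q ∧ q ≤ (M : ℤ) ^ Fintype.card ι ∧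
      ∀ i, |β i * q - l i| < 1 / M := by
  classical
  have hM' : (0 : ℝ) < M := by exact_mod_cast hM
  let f : ℕ → ι → ℕ := fun k i => ⌊(M : ℝ) * Int.fract (β i * k)⌋₊
  have hmaps : ∀ k ∈ Finset.range (M ^ Fintype.card ι + 1),
      f k ∈ Fintype.piFinset fun _ : ι => Finset.range M := by
    intro k _
    rw [Fintype.mem_piFinset]
    intro i
    rw [Finset.mem_range, Nat.floor_lt (mul_nonneg hM'.le (Int.fract_nonneg _))]
    exact mul_lt_of_lt_one_right hM' (Int.fract_lt_one _)
  obtain ⟨a, ha, b, hb, hab, hf⟩ :=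
    Finset.exists_ne_map_eq_of_card_lt_of_maps_to (by simp) hmaps
  wlog hlt : a < b generalizing a b
  · exact this b hb a ha hab.symm hf.symm (by omega)
  rw [Finset.mem_range] at hb
  refine ⟨fun i => ⌊β i * b⌋ - ⌊β i * a⌋, (b : ℤ) - a, by omega, ?_, fun i => ?_⟩
  · have : (b : ℤ) ≤ (M : ℤ) ^ Fintype.card ι := by exact_mod_cast Nat.lt_succ_iff.mp hb
    omega
  · have hfi : ⌊(M : ℝ) * Int.fract (β i * a)⌋₊ = ⌊(M : ℝ) * Int.fract (β i * b)⌋₊ :=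
      congrFun hf i
    have ha₁ := Nat.floor_le (mul_nonneg hM'.le (Int.fract_nonneg (β i * a)))
    have hb₁ := Nat.floor_le (mul_nonneg hM'.le (Int.fract_nonneg (β i * b)))
    have ha₂ := Nat.lt_floor_add_one ((M : ℝ) * Int.fract (β i * a))
    have hb₂ := Nat.lt_floor_add_one ((M : ℝ) * Int.fract (β i * b))
    rw [hfi] at ha₁ ha₂
    have key : β i * ((b : ℤ) - a : ℤ) - (⌊β i * b⌋ - ⌊β i * a⌋ : ℤ) =
        Int.fract (β i * b) - Int.fract (β i * a) := by
      simp only [Int.fract]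
      push_cast
      ring
    rw [key, lt_div_iff₀ hM', ← abs_of_pos hM', ← abs_mul, abs_lt]
    constructor <;> linarith

theorem diff_approx_dirichlet
    (d : ℕ) (hd : 2 ≤ d) (α : Fin d → ℝ) (hα : Function.Injective α)
    (N : ℕ) (hN : 0 < N) :
    ∃ (l : Fin d → ℤ) (q : ℤ), 1 ≤ q ∧ q ≤ (2 * N) ^ (d - 1) ∧
      ∀ i j, |(α i - α j) * q - (l i - l j)| < 1 / N := by
  obtain ⟨n, rfl⟩ : ∃ n, d = n + 1 := ⟨d - 1, by omega⟩
  obtain ⟨l, q, hq, hqM, hl⟩ := exists_int_simultaneous_approx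
    (fun i : Fin n => α i.succ - α 0) (M := 2 * N) (by omega)
  have hN' : (0 : ℝ) < N := by exact_mod_cast hN
  let l' : Fin (n + 1) → ℤ := Fin.cons 0 l
  have hl' : ∀ i, |(α i - α 0) * q - l' i| < 1 / (2 * N) := by
    intro i
    cases i using Fin.cases with
    | zero => simpa [l'] using hN'
    | succ i => simpa [l'] using hl i
  refine ⟨l', q, hq, by simpa using hqM, fun i j => ?_⟩
  calc |(α i - α j) * q - (l' i - l' j)|
      = |((α i - α 0) * q - l' i) - ((α j - α 0) * q - l' j)| := by ring_nf
    _ ≤ |(α i - α 0) * q - l' i| + |(α j - α 0) * q - l' j| := abs_sub _ _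
    _ < 1 / (2 * N) + 1 / (2 * N) := add_lt_add (hl' i) (hl' j)
    _ = 1 / N := by field_simp; norm_num
end

section
/- Let d ≥ 2 and let α_1, …, α_d be distinct real numbers, and let N be a positive integer. Then there exist integers l_1, …, l_d and an integer q with 1 ≤ q ≤ N·(2N+1)^(d−2) such that |(α_i − α_j)·q − (l_i − l_j)| < 1/N for all i, j ∈ {1, …, d}. -/
/-- Two integers whose halves agree modulo `N` differ by at most one, up to a multiple of `2 * N`. -/
lemma exists_sub_eq_of_half_cast_eq {N : ℕ} {a b : ℤ}
    (h : ((a / 2 : ℤ) : ZMod N) = ((b / 2 : ℤ) : ZMod N)) :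
    ∃ k δ : ℤ, |δ| ≤ 1 ∧ a - b = 2 * N * k + δ := by
  obtain ⟨k, hk⟩ := (ZMod.intCast_eq_intCast_iff_dvd_sub _ _ _).1 h.symm
  refine ⟨k, a % 2 - b % 2, abs_le.2 ⟨by omega, by omega⟩, ?_⟩
  have ha := Int.mul_ediv_add_emod a 2
  have hb := Int.mul_ediv_add_emod b 2
  linear_combination -ha + hb + 2 * hk

/-- Simultaneous approximation in which, after scaling by `2 * N`, all errors lie in a common
open interval of length two centred at `-1`, `0` or `1`. -/
lemma exists_approx_common_shift {n N : ℕ} (hN : 0 < N) (β : Fin (n + 1) → ℝ) :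
    ∃ (l : Fin (n + 1) → ℤ) (q δ : ℤ), 1 ≤ q ∧ q ≤ N * (2 * N) ^ n ∧ |δ| ≤ 1 ∧
      ∀ i, |2 * N * (β i * q - l i) - δ| < 1 := by
  have : NeZero N := ⟨hN.ne'⟩
  let m (q : ℕ) (i : Fin (n + 1)) : ℤ := ⌊2 * N * (β i * q)⌋
  -- A box is a pair of cells of side `1 / (2 * N)` of the torus that touch along the diagonal.
  let box (q : Fin (N * (2 * N) ^ n + 1)) : ZMod N × (Fin n → ZMod (2 * N)) :=
    (((m q 0 / 2 : ℤ) : ZMod N), fun i => ((m q i.succ - m q 0 : ℤ) : ZMod (2 * N)))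
  obtain ⟨a, b, hab, hbox⟩ : ∃ a b, b < a ∧ box a = box b := by
    obtain ⟨a, b, hne, h⟩ := Fintype.exists_ne_map_eq_of_card_lt box (by simp [ZMod.card])
    rcases hne.lt_or_gt with hlt | hlt
    · exact ⟨b, a, hlt, h.symm⟩
    · exact ⟨a, b, hlt, h⟩
  obtain ⟨k, δ, hδ, hk⟩ := exists_sub_eq_of_half_cast_eq (congrArg Prod.fst hbox)
  have hshift : ∀ i, ∃ l : ℤ, m a i - m b i = 2 * N * l + δ := by
    refine Fin.cases ⟨k, hk⟩ fun i => ?_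
    obtain ⟨c, hc⟩ := (ZMod.intCast_eq_intCast_iff_dvd_sub _ _ _).1
      (congrFun (congrArg Prod.snd hbox) i).symm
    push_cast at hc
    exact ⟨c + k, by linear_combination hc + hk⟩
  choose l hl using hshift
  have hlt : (b : ℕ) < a := hab
  have hle : (a : ℕ) ≤ N * (2 * N) ^ n := Nat.lt_succ_iff.1 a.2
  refine ⟨l, (a : ℕ) - (b : ℕ), δ, by omega, ?_, hδ, fun i => ?_⟩
  · have : ((a : ℕ) : ℤ) ≤ N * (2 * N) ^ n := by exact_mod_cast hle
    omega
  · have hi : (m a i : ℝ) - m b i = 2 * N * l i + δ := by exact_mod_cast hl i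
    have ha₁ : (m a i : ℝ) ≤ _ := Int.floor_le (2 * N * (β i * (a : ℕ)))
    have ha₂ : _ < (m a i : ℝ) + 1 := Int.lt_floor_add_one (2 * N * (β i * (a : ℕ)))
    have hb₁ : (m b i : ℝ) ≤ _ := Int.floor_le (2 * N * (β i * (b : ℕ)))
    have hb₂ : _ < (m b i : ℝ) + 1 := Int.lt_floor_add_one (2 * N * (β i * (b : ℕ)))
    push_cast
    rw [abs_lt]
    constructor <;> linarith

theorem diff_approx_two_cubes
    (d : ℕ) (hd : 2 ≤ d) (α : Fin d → ℝ) (hα : Function.Injective α)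
    (N : ℕ) (hN : 0 < N) :
    ∃ (l : Fin d → ℤ) (q : ℤ), 1 ≤ q ∧ q ≤ N * (2 * N + 1) ^ (d - 2) ∧
      ∀ i j, |(α i - α j) * q - (l i - l j)| < 1 / N := by
  obtain ⟨n, rfl⟩ := Nat.exists_eq_add_of_le' hd
  obtain ⟨l, q, δ, hq, hqN, hδ, h⟩ :=
    exists_approx_common_shift hN fun i : Fin (n + 1) => α i.succ - α 0
  refine ⟨Fin.cons 0 l, q, hq, hqN.trans ?_, ?_⟩
  · rw [Nat.add_sub_cancel]
    gcongr
    omega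
  · have hN' : (0 : ℝ) < N := by exact_mod_cast hN
    obtain ⟨hδ₁, hδ₂⟩ : (-1 : ℝ) ≤ δ ∧ (δ : ℝ) ≤ 1 := by exact_mod_cast abs_le.1 hδ
    suffices H : ∀ i j, |2 * N * ((α i - α j) * q -
        (((Fin.cons 0 l : Fin (n + 2) → ℤ) i : ℝ) - (Fin.cons 0 l : Fin (n + 2) → ℤ) j))| < 2 by
      intro i j
      have hij := H i j
      rw [abs_mul, abs_of_pos (by positivity)] at hij
      rw [lt_div_iff₀ hN']
      linarith
    intro i j
    rw [abs_lt]
    refine Fin.cases ?_ (fun i => ?_) i <;> refine Fin.cases ?_ (fun j => ?_) j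
    · simp
    · have hj := abs_lt.1 (h j)
      simp only [Fin.cons_zero, Fin.cons_succ, Int.cast_zero]
      constructor <;> linarith
    · have hi := abs_lt.1 (h i)
      simp only [Fin.cons_zero, Fin.cons_succ, Int.cast_zero]
      constructor <;> linarith
    · have hi := abs_lt.1 (h i)
      have hj := abs_lt.1 (h j)
      simp only [Fin.cons_succ]
      constructor <;> linarith
end

section
/- Let d ≥ 2 and let α_1, …, α_d be distinct real numbers, and let N be a positive integer. Then there exist integers l_1, …, l_d and an integer q with 1 ≤ q and d·q ≤ (2N+2)^(d−1) such that |(α_i − α_j)·q − (l_i − l_j)| < 1/N for all i, j ∈ {1, …, d}. -/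
/-- The integer points with least coordinate `0`, attained only at `j`, and the other coordinates
in `{1, …, m}`. -/
def uniqueMinPoint {n m : ℕ} (j : Fin (n + 1)) (y : Fin n → Fin m) : Fin (n + 1) → ℤ :=
  j.insertNth 0 fun a => ((y a : ℕ) : ℤ) + 1

namespace uniqueMinPoint

variable {n m : ℕ}

@[simp]
theorem apply_self (j : Fin (n + 1)) (y : Fin n → Fin m) : uniqueMinPoint j y j = 0 := by
  simp [uniqueMinPoint]

@[simp]
theorem apply_succAbove (j : Fin (n + 1)) (y : Fin n → Fin m) (a : Fin n) :
    uniqueMinPoint j y (j.succAbove a) = ((y a : ℕ) : ℤ) + 1 := by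
  simp [uniqueMinPoint]

theorem nonneg (j : Fin (n + 1)) (y : Fin n → Fin m) (i : Fin (n + 1)) :
    0 ≤ uniqueMinPoint j y i := by
  induction i using j.succAboveCases with
  | x => simp
  | p a => rw [apply_succAbove]; omega

theorem le (j : Fin (n + 1)) (y : Fin n → Fin m) (i : Fin (n + 1)) :
    uniqueMinPoint j y i ≤ m := by
  induction i using j.succAboveCases with
  | x => simp
  | p a => rw [apply_succAbove]; have := (y a).isLt; omega

theorem eq_of_apply_eq_zero {j i : Fin (n + 1)} {y : Fin n → Fin m}
    (h : uniqueMinPoint j y i = 0) : i = j := by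
  induction i using j.succAboveCases with
  | x => rfl
  | p a => rw [apply_succAbove] at h; omega

/-- Two points of the family that differ by a diagonal vector are equal. -/
theorem eq_of_sub_const {j j' : Fin (n + 1)} {y y' : Fin n → Fin m}
    (h : ∀ i k, uniqueMinPoint j y i - uniqueMinPoint j' y' i
      = uniqueMinPoint j y k - uniqueMinPoint j' y' k) : j = j' ∧ y = y' := by
  have hjj' := h j j'
  have h₁ := nonneg j' y' j
  have h₂ := nonneg j y j'
  rw [apply_self, apply_self] at hjj'
  obtain rfl : j = j' := eq_of_apply_eq_zero (y := y') (by omega)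
  refine ⟨rfl, funext fun a => Fin.ext ?_⟩
  have ha := h (j.succAbove a) j
  simp only [apply_succAbove, apply_self] at ha
  omega

end uniqueMinPoint

/-- If the discretized multiples `k • α` and `k' • α`, moved by vectors with entries in `[0, m]` and
by diagonal vectors, agree modulo `M`, then `(k - k') • α` is close to an integer vector modulo
the diagonal. -/
theorem abs_sub_mul_sub_lt_of_floor_add_sub_eq {ι : Type*} {α : ι → ℝ} {M m : ℕ} (hM : 0 < M)
    {k k' s : ℤ} {x x' l : ι → ℤ} (hx : ∀ i, 0 ≤ x i) (hxm : ∀ i, x i ≤ m)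
    (hx' : ∀ i, 0 ≤ x' i) (hxm' : ∀ i, x' i ≤ m)
    (h : ∀ i, ⌊M * k * α i⌋ + x i - (⌊M * k' * α i⌋ + x' i) + s = M * l i) (i j : ι) :
    |(α i - α j) * (k - k' : ℤ) - (l i - l j)| < (2 * m + 2) / M := by
  have hM' : (0 : ℝ) < M := by exact_mod_cast hM
  have hR : ∀ i, (⌊M * k * α i⌋ : ℝ) + x i - (⌊M * k' * α i⌋ + x' i) + s = M * l i :=
    fun i => by exact_mod_cast h i
  have hb : ∀ i, (0 : ℝ) ≤ x i ∧ (x i : ℝ) ≤ m ∧ (0 : ℝ) ≤ x' i ∧ (x' i : ℝ) ≤ m := fun i =>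
    ⟨by exact_mod_cast hx i, by exact_mod_cast hxm i, by exact_mod_cast hx' i,
      by exact_mod_cast hxm' i⟩
  rw [lt_div_iff₀ hM', ← abs_of_pos hM', ← abs_mul]
  have key : ((α i - α j) * (k - k' : ℤ) - (l i - l j)) * M
      = (M * k * α i - M * k' * α i - M * l i) - (M * k * α j - M * k' * α j - M * l j) := by
    push_cast; ring
  rw [key, ← hR i, ← hR j, abs_lt]
  obtain ⟨_, _, _, _⟩ := hb i
  obtain ⟨_, _, _, _⟩ := hb j
  have := Int.floor_le (M * k * α i)
  have := Int.lt_floor_add_one (M * k * α i)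
  have := Int.floor_le (M * k' * α i)
  have := Int.lt_floor_add_one (M * k' * α i)
  have := Int.floor_le (M * k * α j)
  have := Int.lt_floor_add_one (M * k * α j)
  have := Int.floor_le (M * k' * α j)
  have := Int.lt_floor_add_one (M * k' * α j)
  constructor <;> linarith

theorem diff_approx_polytope
    (d : ℕ) (hd : 2 ≤ d) (α : Fin d → ℝ) (hα : Function.Injective α)
    (N : ℕ) (hN : 0 < N) :
    ∃ (l : Fin d → ℤ) (q : ℤ), 1 ≤ q ∧ (d : ℤ) * q ≤ (2 * N + 2) ^ (d - 1) ∧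
      ∀ i j, |(α i - α j) * q - (l i - l j)| < 1 / N := by
  obtain ⟨n, rfl⟩ : ∃ n, d = n + 1 := ⟨d - 1, by omega⟩
  set M : ℕ := (2 * N + 2) * N with hMdef
  have hM : 0 < M := by positivity
  have : NeZero M := ⟨hM.ne'⟩
  have hNM : 2 * N < M := by nlinarith
  set Q : ℕ := (2 * N + 2) ^ n / (n + 1)
  have hQle : (n + 1) * Q ≤ (2 * N + 2) ^ n := Nat.mul_div_le _ _
  have hQlt : (2 * N + 2) ^ n < (Q + 1) * (n + 1) := by
    rw [mul_comm (Q + 1)]; exact Nat.lt_mul_div_succ _ n.succ_pos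
  let f : Fin (Q + 1) × Fin (n + 1) × (Fin n → Fin N) × Fin M → (Fin (n + 1) → ZMod M) :=
    fun p i => ((⌊(M : ℝ) * ((p.1 : ℕ) : ℤ) * α i⌋ + uniqueMinPoint p.2.1 p.2.2.1 i
      + ((p.2.2.2 : ℕ) : ℤ) : ℤ) : ZMod M)
  have hcard : Fintype.card (Fin (n + 1) → ZMod M)
      < Fintype.card (Fin (Q + 1) × Fin (n + 1) × (Fin n → Fin N) × Fin M) := by
    simp only [Fintype.card_prod, Fintype.card_fin, Fintype.card_fun, ZMod.card]
    calc M ^ (n + 1) = (2 * N + 2) ^ n * (N ^ n * M) := by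
          rw [← mul_assoc ((2 * N + 2) ^ n), ← mul_pow, pow_succ]
      _ < (Q + 1) * (n + 1) * (N ^ n * M) := Nat.mul_lt_mul_of_pos_right hQlt (by positivity)
      _ = _ := by ring
  have hbound : ((2 * N + 2 : ℝ)) / M = 1 / N := by
    rw [hMdef]; push_cast; field_simp
  have conclude : ∀ p p', f p = f p' → p'.1 < p.1 → ∃ (l : Fin (n + 1) → ℤ) (q : ℤ), 1 ≤ q ∧
      ((n + 1 : ℕ) : ℤ) * q ≤ (2 * N + 2) ^ (n + 1 - 1) ∧
      ∀ i j, |(α i - α j) * q - (l i - l j)| < 1 / N := by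
    rintro ⟨k, j, y, t⟩ ⟨k', j', y', t'⟩ hff hlt
    have hdvd i := (ZMod.intCast_eq_intCast_iff_dvd_sub _ _ _).1 (congrFun hff i).symm
    choose l hl using hdvd
    have hlt' : (k' : ℕ) < k := hlt
    have hkQ : (k : ℕ) ≤ Q := Nat.lt_succ_iff.1 k.isLt
    refine ⟨l, ((k : ℕ) : ℤ) - ((k' : ℕ) : ℤ), by omega, ?_, fun a b => ?_⟩
    · have hQle' : ((n + 1 : ℕ) : ℤ) * Q ≤ (2 * N + 2) ^ n := by exact_mod_cast hQle
      exact (mul_le_mul_of_nonneg_left (by omega) (by positivity)).trans hQle'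
    · rw [← hbound]
      refine abs_sub_mul_sub_lt_of_floor_add_sub_eq hM (s := ((t : ℕ) : ℤ) - ((t' : ℕ) : ℤ))
        (uniqueMinPoint.nonneg j y) (uniqueMinPoint.le j y) (uniqueMinPoint.nonneg j' y')
        (uniqueMinPoint.le j' y') (fun i => ?_) a b
      rw [← hl i]; ring
  obtain ⟨p, p', hne, hff⟩ := Fintype.exists_ne_map_eq_of_card_lt f hcard
  rcases lt_trichotomy p.1 p'.1 with hlt | heq | hlt
  · exact conclude p' p hff.symm hlt
  · refine absurd ?_ hne
    obtain ⟨k, j, y, t⟩ := p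
    obtain ⟨k', j', y', t'⟩ := p'
    obtain rfl : k = k' := heq
    have hdvd i := (ZMod.intCast_eq_intCast_iff_dvd_sub _ _ _).1 (congrFun hff i).symm
    have hconst : ∀ a b, uniqueMinPoint j y a - uniqueMinPoint j' y' a
        = uniqueMinPoint j y b - uniqueMinPoint j' y' b := fun a b => by
      have hab := dvd_sub (hdvd a) (hdvd b)
      have := uniqueMinPoint.nonneg j y a
      have := uniqueMinPoint.le j y a
      have := uniqueMinPoint.nonneg j y b
      have := uniqueMinPoint.le j y b
      have := uniqueMinPoint.nonneg j' y' a
      have := uniqueMinPoint.le j' y' a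
      have := uniqueMinPoint.nonneg j' y' b
      have := uniqueMinPoint.le j' y' b
      have := Int.eq_zero_of_abs_lt_dvd hab (abs_lt.2 ⟨by simp only; omega, by simp only; omega⟩)
      simp only at this
      omega
    obtain ⟨rfl, rfl⟩ := uniqueMinPoint.eq_of_sub_const hconst
    have ht := Int.eq_zero_of_abs_lt_dvd (hdvd 0)
      (abs_lt.2 ⟨by simp only; omega, by simp only; omega⟩)
    obtain rfl : t = t' := Fin.ext (by simp only at ht; omega)
    rfl
  · exact conclude p p' hff hlt
end

section
/- Let d ≥ 3, let α_1, …, α_d be distinct real numbers, let N be a positive integer, and suppose that for some indices n ≠ m the difference α_n − α_m is an integer. Then: (a) there exist integers l_1, …, l_d and an integer q with 1 ≤ q ≤ N·(2N+1)^(d−3) such that |(α_i − α_j)·q − (l_i − l_j)| < 1/N for all i, j; and (b) there exist integers l′_1, …, l′_d and an integer q′ with 1 ≤ q′ and (d−1)·q′ ≤ (2N+2)^(d−2) such that |(α_i − α_j)·q′ − (l′_i − l′_j)| < 1/N for all i, j. -/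
/-- A common slope `s` such that no two of the shifted points `c q i + s * i` agree modulo `1`. -/
lemma exists_shift_sub_ne_int {k : ℕ} (c : ℕ → Fin k → ℝ) :
    ∃ s : ℝ, ∀ (q : ℕ) (i j : Fin k), i ≠ j → ∀ z : ℤ,
      (c q i + s * (i : ℕ)) - (c q j + s * (j : ℕ)) ≠ z := by
  let bad : ℕ × Fin k × Fin k × ℤ → ℝ := fun p =>
    ((p.2.2.2 : ℝ) - (c p.1 p.2.1 - c p.1 p.2.2.1)) / ((p.2.1 : ℕ) - (p.2.2.1 : ℕ) : ℝ)
  obtain ⟨s, hs⟩ : ∃ s, s ∉ Set.range bad := by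
    by_contra! h
    exact Cardinal.not_countable_real
      ((Set.countable_range bad).mono fun x _ => h x)
  refine ⟨s, fun q i j hij z hz => hs ⟨(q, i, j, z), ?_⟩⟩
  have hne : ((i : ℕ) - (j : ℕ) : ℝ) ≠ 0 := by
    rw [sub_ne_zero]
    exact_mod_cast fun h => hij (Fin.ext h)
  simp only [bad]
  rw [div_eq_iff hne, ← hz]
  ring

/-- Simultaneous approximation of the pairwise differences of `k + 1` reals, by the pigeonhole
principle: each pair `(q, j)` with `q ≤ Q` singles out one of the `(2 * N) ^ k` classes modulo `2 * N`
of integer vectors up to a common shift, namely that of `i ↦ ⌊γ q i - γ q j⌋` where `γ q` is a generic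
translate of `2 * N * q * α`. -/
lemma exists_diff_approx {k : ℕ} (α : Fin (k + 1) → ℝ) {N : ℕ} (hN : 0 < N) {Q : ℕ}
    (hQ : (2 * N) ^ k < (Q + 1) * (k + 1)) :
    ∃ (l : Fin (k + 1) → ℤ) (q : ℤ), 1 ≤ q ∧ q ≤ Q ∧
      ∀ i j, |(α i - α j) * q - (l i - l j)| < 1 / N := by
  have hN' : (0 : ℝ) < N := by exact_mod_cast hN
  have hN1 : (1 : ℝ) ≤ N := by exact_mod_cast hN
  obtain ⟨s, hs⟩ := exists_shift_sub_ne_int (fun q (i : Fin (k + 1)) => 2 * N * q * α i)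
  let γ : ℕ → Fin (k + 1) → ℝ := fun q i => 2 * N * q * α i + s * (i : ℕ)
  have hγ (q : ℕ) (i j : Fin (k + 1)) (hij : i ≠ j) : 0 < Int.fract (γ q i - γ q j) := by
    refine lt_of_le_of_ne (Int.fract_nonneg _) fun h => hs q i j hij ⌊γ q i - γ q j⌋ ?_
    have := Int.self_sub_floor (γ q i - γ q j)
    simp only [γ] at this h ⊢
    linarith
  let u : Fin (Q + 1) × Fin (k + 1) → Fin (k + 1) → ℤ := fun p i => ⌊γ p.1 i - γ p.1 p.2⌋
  have : NeZero (2 * N) := ⟨by positivity⟩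
  let F : Fin (Q + 1) × Fin (k + 1) → Fin k → ZMod (2 * N) :=
    fun p i => ((u p i.succ - u p 0 : ℤ) : ZMod (2 * N))
  obtain ⟨a, b, hab, hF, hle⟩ : ∃ a b, a ≠ b ∧ F a = F b ∧ b.1 ≤ a.1 := by
    obtain ⟨a, b, hab, hF⟩ := Fintype.exists_ne_map_eq_of_card_lt F (by simpa using hQ)
    rcases le_total b.1 a.1 with h | h
    · exact ⟨a, b, hab, hF, h⟩
    · exact ⟨b, a, hab.symm, hF.symm, h⟩
  have hdvd (i : Fin (k + 1)) :
      ∃ t : ℤ, (u a i - u a 0) - (u b i - u b 0) = ((2 * N : ℕ) : ℤ) * t := by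
    refine Fin.cases ⟨0, by simp⟩ (fun i => ?_) i
    have h := congrFun hF i
    simp only [F] at h
    exact (ZMod.intCast_eq_intCast_iff_dvd_sub _ _ _).1 h.symm
  choose t ht using hdvd
  let r : Fin (Q + 1) × Fin (k + 1) → Fin (k + 1) → ℝ :=
    fun p i => Int.fract (γ p.1 i - γ p.1 p.2)
  have hr0 (p i) : 0 ≤ r p i := Int.fract_nonneg _
  have hr1 (p i) : r p i < 1 := Int.fract_lt_one _
  have hu (p i) : (u p i : ℝ) = γ p.1 i - γ p.1 p.2 - r p i := by
    have := Int.self_sub_floor (γ p.1 i - γ p.1 p.2)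
    simp only [u, r]
    linarith
  have key (i j : Fin (k + 1)) :
      2 * N * ((α i - α j) * ((a.1 : ℕ) - (b.1 : ℕ) : ℝ) - (t i - t j)) =
        (r a i - r a j) - (r b i - r b j) := by
    have hi : ((u a i : ℝ) - u a 0) - (u b i - u b 0) = 2 * N * t i := by exact_mod_cast ht i
    have hj : ((u a j : ℝ) - u a 0) - (u b j - u b 0) = 2 * N * t j := by exact_mod_cast ht j
    simp only [hu, γ] at hi hj
    linear_combination hi - hj
  have approx (i j : Fin (k + 1)) :
      |(α i - α j) * ((a.1 : ℕ) - (b.1 : ℕ) : ℝ) - (t i - t j)| < 1 / N := by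
    rw [lt_div_iff₀ hN', ← abs_of_pos hN', ← abs_mul, abs_lt]
    have := key i j
    constructor <;>
      linarith [hr0 a i, hr0 a j, hr0 b i, hr0 b j, hr1 a i, hr1 a j, hr1 b i, hr1 b j]
  have hne : b.1 ≠ a.1 := by
    intro h
    have h2 : a.2 ≠ b.2 := fun h' => hab (Prod.ext h.symm h')
    have ht' : t a.2 - t b.2 = 0 := by
      have h1 := approx a.2 b.2
      rw [h, sub_self, mul_zero, zero_sub, abs_neg] at h1
      have h3 : |(t a.2 - t b.2 : ℝ)| < 1 := h1.trans_le ((div_le_one hN').2 hN1)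
      exact Int.abs_lt_one_iff.1 (by exact_mod_cast h3)
    have ht'' : (t a.2 - t b.2 : ℝ) = 0 := by exact_mod_cast ht'
    have hk := key a.2 b.2
    rw [h, ht''] at hk
    have e1 : r a a.2 = 0 := by simp [r]
    have e2 : r b b.2 = 0 := by simp [r]
    have e3 : 0 < r a b.2 := hγ _ _ _ h2.symm
    have e4 : 0 < r b a.2 := hγ _ _ _ h2
    linarith
  have hlt : (b.1 : ℕ) < a.1 := hle.lt_of_ne hne
  refine ⟨t, (a.1 : ℕ) - (b.1 : ℕ), by omega, by omega, fun i j => ?_⟩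
  have := approx i j
  push_cast
  exact this

/-- Approximations of the differences of the family `β` transfer to any family `α` whose members
agree with members of `β` modulo `1`. -/
lemma diff_approx_of_sub_eq_int {ι κ : Type*} {α : ι → ℝ} {β : κ → ℝ}
    (h : ∀ i, ∃ (j : κ) (z : ℤ), α i - β j = z) {ε : ℝ} {l : κ → ℤ} {q : ℤ}
    (hl : ∀ i j, |(β i - β j) * q - (l i - l j)| < ε) :
    ∃ l' : ι → ℤ, ∀ i j, |(α i - α j) * q - (l' i - l' j)| < ε := by
  choose f z hz using h
  refine ⟨fun i => l (f i) + z i * q, fun i j => ?_⟩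
  convert hl (f i) (f j) using 2
  push_cast
  linear_combination (q : ℝ) * hz i - (q : ℝ) * hz j

theorem diff_approx_integer_difference
    (d : ℕ) (hd : 3 ≤ d) (α : Fin d → ℝ) (hα : Function.Injective α)
    (N : ℕ) (hN : 0 < N)
    (n m : Fin d) (hnm : n ≠ m) (hint : ∃ z : ℤ, α n - α m = z) :
    (∃ (l : Fin d → ℤ) (q : ℤ), 1 ≤ q ∧ q ≤ N * (2 * N + 1) ^ (d - 3) ∧
      ∀ i j, |(α i - α j) * q - (l i - l j)| < 1 / N) ∧
    (∃ (l' : Fin d → ℤ) (q' : ℤ), 1 ≤ q' ∧ ((d : ℤ) - 1) * q' ≤ (2 * N + 2) ^ (d - 2) ∧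
      ∀ i j, |(α i - α j) * q' - (l' i - l' j)| < 1 / N) := by
  obtain ⟨k, rfl⟩ : ∃ k, d = k + 1 + 1 + 1 := ⟨d - 3, by omega⟩
  have hrep (i : Fin (k + 1 + 1 + 1)) :
      ∃ (j : Fin (k + 1 + 1)) (z : ℤ), α i - (α ∘ n.succAbove) j = z := by
    by_cases hi : i = n
    · obtain ⟨j, rfl⟩ := Fin.exists_succAbove_eq hnm.symm
      subst hi
      exact ⟨j, hint⟩
    · obtain ⟨j, rfl⟩ := Fin.exists_succAbove_eq hi
      exact ⟨j, 0, by simp⟩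
  constructor
  · have hQ : (2 * N) ^ (k + 1) < (N * (2 * N + 1) ^ k + 1) * (k + 1 + 1) := by
      have h : (2 * N) ^ k ≤ (2 * N + 1) ^ k := Nat.pow_le_pow_left (by omega) k
      calc (2 * N) ^ (k + 1) = N * (2 * N) ^ k * 2 := by ring
        _ ≤ N * (2 * N + 1) ^ k * 2 := by gcongr
        _ < (N * (2 * N + 1) ^ k + 1) * 2 := by omega
        _ ≤ _ := by gcongr; omega
    obtain ⟨l, q, h1, h2, hl⟩ := exists_diff_approx (α ∘ n.succAbove) hN hQ
    obtain ⟨l', hl'⟩ := diff_approx_of_sub_eq_int hrep hl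
    exact ⟨l', q, h1, by simpa using h2, hl'⟩
  · have hQ : (2 * N) ^ (k + 1) < ((2 * N + 2) ^ (k + 1) / (k + 1 + 1) + 1) * (k + 1 + 1) := by
      have h : (2 * N) ^ (k + 1) ≤ (2 * N + 2) ^ (k + 1) := Nat.pow_le_pow_left (by omega) _
      rw [mul_comm _ (k + 1 + 1)]
      exact h.trans_lt (Nat.lt_mul_div_succ _ (by omega))
    obtain ⟨l, q, h1, h2, hl⟩ := exists_diff_approx (α ∘ n.succAbove) hN hQ
    obtain ⟨l', hl'⟩ := diff_approx_of_sub_eq_int hrep hl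
    refine ⟨l', q, h1, ?_, hl'⟩
    have h3 : (k + 1 + 1) * ((2 * N + 2) ^ (k + 1) / (k + 1 + 1)) ≤ (2 * N + 2) ^ (k + 1) :=
      Nat.mul_div_le _ _
    calc (((k + 1 + 1 + 1 : ℕ) : ℤ) - 1) * q = ((k + 1 + 1 : ℕ) : ℤ) * q := by push_cast; ring
      _ ≤ ((k + 1 + 1 : ℕ) : ℤ) * (((2 * N + 2) ^ (k + 1) / (k + 1 + 1) : ℕ) : ℤ) := by gcongr
      _ ≤ (2 * N + 2) ^ (k + 1) := by exact_mod_cast h3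
end

section
/- Let U be a D×D unitary complex matrix whose spectrum consists of exactly d ≥ 2 distinct eigenvalues e^{iφ_1}, …, e^{iφ_d} with each φ_k ∈ [0, 2π). Then for every ε with 0 < ε ≤ 1/2 there exists a positive integer m_r with m_r ≤ (π / max_{j,k} R(φ_j, φ_k)) · ⌈π/ε⌉ · (2⌈π/ε⌉ + 1)^(d−2) such that: (i) for every unit vector ψ ∈ ℂ^D, 1 − |⟨ψ, U^{m_r} ψ⟩|² ≤ ε², and (ii) there exist a unit vector φ ∈ ℂ^D and a positive integer m′ ≤ m_r such that 1 − |⟨φ, U^{m′} φ⟩|² > ε². -/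
open Matrix Real

/-- Simultaneous Dirichlet approximation up to a common shift. -/
theorem exists_pos_le_forall_abs_sub_sub_le (n N : ℕ) (hN : 0 < N) (t : Fin (n + 2) → ℝ) :
    ∃ j : ℕ, 0 < j ∧ j ≤ N * (2 * N) ^ n ∧
      ∃ c : ℝ, ∀ k, ∃ z : ℤ, |j * t k - c - z| ≤ 1 / (2 * N) := by
  have hN' : (0 : ℝ) < N := by exact_mod_cast hN
  let u : ℕ → ℝ := fun s => Int.fract (s * (t 1 - t 0))
  let r : ℕ → ℝ := fun s => Int.fract (N * u s) / N
  let y : ℕ → Fin n → ℝ := fun s i => Int.fract (s * (t i.succ.succ - t 0) - r s / 2)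
  have floor_lt : ∀ (K : ℕ) (x : ℝ), 0 < K → ⌊(K : ℝ) * Int.fract x⌋₊ < K := by
    intro K x hK
    have hK' : (0 : ℝ) < K := by exact_mod_cast hK
    rw [Nat.floor_lt (mul_nonneg hK'.le (Int.fract_nonneg x))]
    nlinarith [Int.fract_lt_one x]
  let F : ℕ → Fin N × (Fin n → Fin (2 * N)) := fun s =>
    (⟨⌊(N : ℝ) * u s⌋₊, floor_lt _ _ hN⟩,
      fun i => ⟨⌊((2 * N : ℕ) : ℝ) * y s i⌋₊, floor_lt _ _ (by omega)⟩)
  obtain ⟨a, ha, b, hb, hab, hF⟩ :=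
    Finset.exists_ne_map_eq_of_card_lt_of_maps_to (s := Finset.range (N * (2 * N) ^ n + 1))
      (t := Finset.univ) (f := F) (by simp) (fun _ _ => by simp)
  wlog hlt : a < b generalizing a b
  · exact this b hb a ha hab.symm hF.symm (by omega)
  rw [Finset.mem_range] at ha hb
  have hr : ∀ s, 0 ≤ r s ∧ r s ≤ 1 / N := fun s =>
    ⟨div_nonneg (Int.fract_nonneg _) hN'.le, by
      simp only [r]; gcongr; exact (Int.fract_lt_one _).le⟩
  have hr2 : |(r b - r a) / 2| ≤ 1 / (2 * N) := by
    have h : (1 : ℝ) / (2 * N) = 1 / N / 2 := by field_simp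
    rw [h, abs_le]
    constructor <;> linarith [(hr a).1, (hr a).2, (hr b).1, (hr b).2]
  have hcast : ((b - a : ℕ) : ℝ) = b - a := by push_cast [hlt.le]; ring
  have hu : u b - u a = r b - r a := by
    have h1 : ⌊(N : ℝ) * u a⌋₊ = ⌊(N : ℝ) * u b⌋₊ := by
      simpa [F] using congrArg (fun p => (p.1 : ℕ)) hF
    have h2 : ∀ s, u s = ⌊(N : ℝ) * u s⌋₊ / N + r s := by
      intro s
      have h0 : 0 ≤ (N : ℝ) * u s := mul_nonneg hN'.le (Int.fract_nonneg _)
      have h3 : ((⌊(N : ℝ) * u s⌋₊ : ℕ) : ℝ) = ((⌊(N : ℝ) * u s⌋ : ℤ) : ℝ) :=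
        natCast_floor_eq_intCast_floor h0
      have h4 := Int.floor_add_fract ((N : ℝ) * u s)
      simp only [r]
      rw [h3, ← add_div, h4]
      field_simp
    rw [h2 a, h2 b, h1]; ring
  refine ⟨b - a, by omega, by omega, (b - a : ℕ) * t 0 + (r b - r a) / 2, fun k => ?_⟩
  rw [hcast]
  refine Fin.cases ⟨0, ?_⟩ (fun k => Fin.cases ⟨⌊b * (t 1 - t 0)⌋ - ⌊a * (t 1 - t 0)⌋, ?_⟩
    (fun i => ⟨⌊b * (t i.succ.succ - t 0) - r b / 2⌋ - ⌊a * (t i.succ.succ - t 0) - r a / 2⌋, ?_⟩)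
    k) k
  · rw [← abs_neg]
    convert hr2 using 2
    push_cast; ring
  · convert hr2 using 2
    have h1 := Int.floor_add_fract ((b : ℝ) * (t 1 - t 0))
    have h2 := Int.floor_add_fract ((a : ℝ) * (t 1 - t 0))
    simp only [u] at hu
    rw [Fin.succ_zero_eq_one]
    push_cast
    linarith
  · have h1 : ⌊((2 * N : ℕ) : ℝ) * y a i⌋₊ = ⌊((2 * N : ℕ) : ℝ) * y b i⌋₊ := by
      simpa [F] using congrArg (fun p => (p.2 i : ℕ)) hF
    have hy : |y b i - y a i| ≤ 1 / (2 * N) := by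
      have ya : 0 ≤ ((2 * N : ℕ) : ℝ) * y a i := mul_nonneg (by positivity) (Int.fract_nonneg _)
      have yb : 0 ≤ ((2 * N : ℕ) : ℝ) * y b i := mul_nonneg (by positivity) (Int.fract_nonneg _)
      have l1 := Nat.floor_le ya
      have l2 := Nat.floor_le yb
      have l3 := Nat.lt_floor_add_one (((2 * N : ℕ) : ℝ) * y a i)
      have l4 := Nat.lt_floor_add_one (((2 * N : ℕ) : ℝ) * y b i)
      rw [h1] at l1 l3
      push_cast at l1 l2 l3 l4
      rw [le_div_iff₀ (by positivity), ← abs_of_pos (show (0 : ℝ) < 2 * N by positivity),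
        ← abs_mul, abs_le]
      constructor <;> linarith
    convert hy using 2
    have h1 := Int.floor_add_fract ((b : ℝ) * (t i.succ.succ - t 0) - r b / 2)
    have h2 := Int.floor_add_fract ((a : ℝ) * (t i.succ.succ - t 0) - r a / 2)
    simp only [y]
    push_cast
    linarith

open scoped Matrix.Norms.L2Operator ComplexOrder in
/-- If the `m`-th powers of the eigenvalues of a normal matrix lie in a half-plane at distance `s`
from the origin, then so does the numerical range of its `m`-th power. -/
theorem le_norm_star_dotProduct_pow_mulVec {ι : Type*} [Fintype ι] [DecidableEq ι]
    (U : Matrix ι ι ℂ) (hU : IsStarNormal U) (m : ℕ) (c : ℂ) (hc : ‖c‖ = 1) (s : ℝ)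
    (h : ∀ z ∈ spectrum ℂ U, s ≤ (star c * z ^ m).re) (ψ : ι → ℂ) (hψ : star ψ ⬝ᵥ ψ = 1) :
    s ≤ ‖star ψ ⬝ᵥ ((U ^ m) *ᵥ ψ)‖ := by
  let b : Matrix ι ι ℂ := cfc (fun z : ℂ => ((√((star c * z ^ m).re - s) : ℝ) : ℂ)) U
  have hb : star b * b = (1 / 2 : ℂ) • (star c • U ^ m + c • star (U ^ m)) - (s : ℂ) • 1 := by
    have e1 : star b * b = cfc (fun z : ℂ =>
        (1 / 2 : ℂ) * (star c * z ^ m + c * star (z ^ m)) - (s : ℂ)) U := by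
      rw [← cfc_star, ← cfc_mul _ _ U]
      refine cfc_congr fun z hz => ?_
      have h0 := h z hz
      have e2 : ((√((star c * z ^ m).re - s) : ℝ) : ℂ) * ((√((star c * z ^ m).re - s) : ℝ) : ℂ)
          = (((star c * z ^ m).re - s : ℝ) : ℂ) := by
        rw [← Complex.ofReal_mul, Real.mul_self_sqrt (by linarith)]
      simp only [RCLike.star_def, Complex.conj_ofReal] at e2 ⊢
      rw [e2]
      push_cast
      rw [Complex.re_eq_add_conj]
      simp
      ring
    rw [e1, cfc_sub _ _ U, cfc_const_mul _ _ U, cfc_add U _ _, cfc_const_mul _ _ U,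
      cfc_const_mul _ _ U, cfc_star, cfc_pow_id (R := ℂ) U m, cfc_const _ U,
      Algebra.algebraMap_eq_smul_one]
  set w : ℂ := star ψ ⬝ᵥ ((U ^ m) *ᵥ ψ) with hw
  have hw' : star ψ ⬝ᵥ (star (U ^ m) *ᵥ ψ) = star w := by
    rw [hw, star_dotProduct, star_mulVec, ← dotProduct_mulVec, star_eq_conjTranspose,
      conjTranspose_conjTranspose]
  have h1 : star ψ ⬝ᵥ ((star b * b) *ᵥ ψ) = (((star c * w).re - s : ℝ) : ℂ) := by
    rw [hb, sub_mulVec, smul_mulVec, add_mulVec, smul_mulVec, smul_mulVec, smul_mulVec,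
      one_mulVec, dotProduct_sub, dotProduct_smul, dotProduct_add, dotProduct_smul,
      dotProduct_smul, dotProduct_smul, hψ, hw', ← hw]
    push_cast
    rw [Complex.re_eq_add_conj]
    simp
    ring
  have h2 : 0 ≤ star ψ ⬝ᵥ ((star b * b) *ᵥ ψ) :=
    (posSemidef_conjTranspose_mul_self b).dotProduct_mulVec_nonneg ψ
  rw [h1, Complex.zero_le_real] at h2
  calc s ≤ (star c * w).re := by linarith
    _ ≤ ‖star c * w‖ := Complex.re_le_norm _
    _ = ‖w‖ := by simp [hc]

open scoped ComplexOrder in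
/-- The balanced superposition of eigenvectors of a unitary matrix with distinct eigenvalues
`exp (i a)` and `exp (i b)` has return probability `(1 + cos (m (a - b))) / 2` after `m` steps. -/
theorem exists_unit_norm_sq_star_dotProduct_pow_mulVec {ι : Type*} [Fintype ι] [DecidableEq ι]
    (U : Matrix ι ι ℂ) (hU : U ∈ unitaryGroup ι ℂ) (a b : ℝ)
    (hab : Complex.exp (Complex.I * a) ≠ Complex.exp (Complex.I * b))
    (ha : Complex.exp (Complex.I * a) ∈ spectrum ℂ U)
    (hb : Complex.exp (Complex.I * b) ∈ spectrum ℂ U) :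
    ∃ χ : ι → ℂ, star χ ⬝ᵥ χ = 1 ∧
      ∀ m : ℕ, ‖star χ ⬝ᵥ ((U ^ m) *ᵥ χ)‖ ^ 2 = (1 + cos (m * (a - b))) / 2 := by
  have key : ∀ z ∈ spectrum ℂ U, ∃ v : ι → ℂ, star v ⬝ᵥ v = 1 ∧ U *ᵥ v = z • v := by
    intro z hz
    rw [← Matrix.spectrum_toLin', ← Module.End.hasEigenvalue_iff_mem_spectrum] at hz
    obtain ⟨v, hv⟩ := hz.exists_hasEigenvector
    have hv1 : U *ᵥ v = z • v := by simpa using hv.apply_eq_smul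
    have hpos : 0 < star v ⬝ᵥ v := dotProduct_star_self_pos_iff.2 hv.2
    obtain ⟨hre, him⟩ := Complex.pos_iff.1 hpos
    set r := (star v ⬝ᵥ v).re
    have hr : star v ⬝ᵥ v = (r : ℂ) := Complex.ext rfl (by simp [← him])
    have hrr : ((√r : ℝ) : ℂ) * ((√r : ℝ) : ℂ) = r := by
      rw [← Complex.ofReal_mul, Real.mul_self_sqrt hre.le]
    have hs0 : ((√r : ℝ) : ℂ) ≠ 0 := by
      rw [Complex.ofReal_ne_zero]; exact (Real.sqrt_pos.2 hre).ne'
    refine ⟨((√r : ℝ) : ℂ)⁻¹ • v, ?_, ?_⟩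
    · rw [star_smul, smul_dotProduct, dotProduct_smul, hr, ← hrr]
      simp [hs0]
    · rw [mulVec_smul, hv1, smul_comm]
  have hpow : ∀ (z : ℂ) (v : ι → ℂ), U *ᵥ v = z • v → ∀ m : ℕ, (U ^ m) *ᵥ v = z ^ m • v := by
    intro z v hv m
    induction m with
    | zero => simp
    | succ m ih => rw [pow_succ, ← mulVec_mulVec, hv, mulVec_smul, ih, smul_smul, pow_succ']
  obtain ⟨v, hv1, hv⟩ := key _ ha
  obtain ⟨w, hw1, hw⟩ := key _ hb
  set A := Complex.exp (Complex.I * a) with hA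
  set B := Complex.exp (Complex.I * b) with hB
  have hAA : star A * A = 1 := by
    rw [RCLike.star_def, Complex.conj_mul', hA, mul_comm, Complex.norm_exp_ofReal_mul_I]
    simp
  have hvw : star v ⬝ᵥ w = 0 := by
    have h1 : star (U *ᵥ v) ⬝ᵥ (U *ᵥ w) = star v ⬝ᵥ w := by
      rw [star_mulVec, ← dotProduct_mulVec, mulVec_mulVec, ← star_eq_conjTranspose,
        mem_unitaryGroup_iff'.1 hU, one_mulVec]
    rw [hv, hw, star_smul, smul_dotProduct, dotProduct_smul, smul_eq_mul, smul_eq_mul,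
      ← mul_assoc] at h1
    by_contra hne
    have h2 : star A * B = 1 := by
      apply mul_right_cancel₀ hne; rw [h1, one_mul]
    apply hab
    have h3 : star A ≠ 0 := fun h => by simp [h] at hAA
    exact mul_left_cancel₀ h3 (hAA.trans h2.symm)
  have hwv : star w ⬝ᵥ v = 0 := by
    rw [star_dotProduct, hvw, star_zero]
  have hs : ((√2 : ℝ) : ℂ)⁻¹ * ((√2 : ℝ) : ℂ)⁻¹ = 1 / 2 := by
    rw [← mul_inv, ← Complex.ofReal_mul, Real.mul_self_sqrt (by norm_num)]; norm_num
  have hform : ∀ x y : ℂ, star (((√2 : ℝ) : ℂ)⁻¹ • (v + w)) ⬝ᵥ (((√2 : ℝ) : ℂ)⁻¹ • (x • v + y • w))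
      = (x + y) / 2 := by
    intro x y
    simp only [star_smul, star_add, smul_dotProduct, dotProduct_smul, add_dotProduct,
      dotProduct_add, hv1, hw1, hvw, hwv, smul_eq_mul]
    rw [show star (((√2 : ℝ) : ℂ)⁻¹) = ((√2 : ℝ) : ℂ)⁻¹ by simp]
    linear_combination (x + y) * hs
  refine ⟨((√2 : ℝ) : ℂ)⁻¹ • (v + w), by simpa using hform 1 1, fun m => ?_⟩
  rw [mulVec_smul, mulVec_add, hpow _ _ hv, hpow _ _ hw, hform, hA, hB, ← Complex.exp_nat_mul,
    ← Complex.exp_nat_mul, ← Complex.normSq_eq_norm_sq, Complex.normSq_apply]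
  rw [show (m : ℂ) * (Complex.I * a) = ((m * a : ℝ) : ℂ) * Complex.I by push_cast; ring,
    show (m : ℂ) * (Complex.I * b) = ((m * b : ℝ) : ℂ) * Complex.I by push_cast; ring]
  rw [show (2 : ℂ) = ((2 : ℝ) : ℂ) by norm_num, Complex.div_ofReal_re, Complex.div_ofReal_im,
    Complex.add_re, Complex.add_im, Complex.exp_ofReal_mul_I_re, Complex.exp_ofReal_mul_I_re,
    Complex.exp_ofReal_mul_I_im, Complex.exp_ofReal_mul_I_im, mul_sub, cos_sub]
  linear_combination (1 / 4) * sin_sq_add_cos_sq (m * a) + (1 / 4) * sin_sq_add_cos_sq (m * b)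

/-- Within `⌊π / δ⌋` steps a rotation by the circle distance `δ` reaches the left half-plane. -/
theorem exists_pos_le_cos_nonpos {x : ℝ} (hx : 0 < min |x| (2 * π - |x|)) :
    ∃ τ : ℕ, 0 < τ ∧ (τ : ℝ) ≤ π / min |x| (2 * π - |x|) ∧ cos (τ * x) ≤ 0 := by
  set δ := min |x| (2 * π - |x|) with hδ
  have hπ := Real.pi_pos
  have hδπ : δ ≤ π := by
    linarith [min_le_left |x| (2 * π - |x|), min_le_right |x| (2 * π - |x|)]
  have h1 : 1 ≤ ⌊π / δ⌋₊ := by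
    rw [Nat.one_le_floor_iff, le_div_iff₀ hx]; linarith
  have hle : (⌊π / δ⌋₊ : ℝ) ≤ π / δ := Nat.floor_le (by positivity)
  have hcos : ∀ n : ℕ, cos (n * x) = cos (n * δ) := by
    intro n
    have habs : cos (n * x) = cos (n * |x|) := by
      rw [← cos_abs, abs_mul, Nat.abs_cast]
    rcases min_choice |x| (2 * π - |x|) with h | h
    · rw [hδ, h, habs]
    · rw [hδ, h, habs, mul_sub, cos_nat_mul_two_pi_sub]
  refine ⟨⌊π / δ⌋₊, h1, hle, ?_⟩
  rw [hcos]
  have h2 : (⌊π / δ⌋₊ : ℝ) * δ ≤ π := by rwa [← le_div_iff₀ hx]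
  have h3 : π < (⌊π / δ⌋₊ + 1 : ℝ) * δ := by
    rw [← div_lt_iff₀ hx]; exact Nat.lt_floor_add_one _
  have h4 : (1 : ℝ) ≤ ⌊π / δ⌋₊ := by exact_mod_cast h1
  apply cos_nonpos_of_pi_div_two_le_of_le <;> nlinarith

theorem recurrence_time_unitary_two_cubes
    (D d : ℕ) (hd : 2 ≤ d) (U : Matrix (Fin D) (Fin D) ℂ)
    (hU : U ∈ Matrix.unitaryGroup (Fin D) ℂ)
    (φ : Fin d → ℝ) (hφ : ∀ k, 0 ≤ φ k ∧ φ k < 2 * π)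
    (hφinj : Function.Injective φ)
    (hspec : spectrum ℂ U = Set.range (fun k => Complex.exp (Complex.I * φ k)))
    (ε : ℝ) (hε0 : 0 < ε) (hε1 : ε ≤ 1 / 2) :
    ∃ mr : ℕ, 0 < mr ∧
      (mr : ℝ) ≤ (π / ⨆ p : Fin d × Fin d, min |φ p.1 - φ p.2| (2 * π - |φ p.1 - φ p.2|)) *
        (⌈π / ε⌉ : ℝ) * (2 * ⌈π / ε⌉ + 1 : ℝ) ^ (d - 2) ∧
      (∀ ψ : Fin D → ℂ, star ψ ⬝ᵥ ψ = 1 →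
        1 - ‖star ψ ⬝ᵥ ((U ^ mr) *ᵥ ψ)‖ ^ 2 ≤ ε ^ 2) ∧
      (∃ χ : Fin D → ℂ, star χ ⬝ᵥ χ = 1 ∧ ∃ m' : ℕ, 0 < m' ∧ m' ≤ mr ∧
        1 - ‖star χ ⬝ᵥ ((U ^ m') *ᵥ χ)‖ ^ 2 > ε ^ 2) := by
  obtain ⟨n, rfl⟩ : ∃ n, d = n + 2 := ⟨d - 2, by omega⟩
  have hπ := Real.pi_pos
  set R : Fin (n + 2) × Fin (n + 2) → ℝ :=
    fun p => min |φ p.1 - φ p.2| (2 * π - |φ p.1 - φ p.2|) with hR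
  obtain ⟨p, hp⟩ := exists_eq_ciSup_of_finite (f := R)
  have hRp : 0 < R p := by
    rw [hp]
    refine lt_of_lt_of_le ?_ (le_ciSup (Set.finite_range R).bddAbove (0, 1))
    have h01 : φ 0 - φ 1 ≠ 0 := sub_ne_zero.2 fun h => by simpa using hφinj h
    refine lt_min (abs_pos.2 h01) ?_
    rw [sub_pos, abs_lt]
    constructor <;> linarith [(hφ 0).1, (hφ 0).2, (hφ 1).1, (hφ 1).2]
  obtain ⟨τ, hτ0, hτle, hτcos⟩ := exists_pos_le_cos_nonpos (x := φ p.1 - φ p.2) hRp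
  have hceil : ((⌈π / ε⌉₊ : ℕ) : ℝ) = ⌈π / ε⌉ := natCast_ceil_eq_intCast_ceil (by positivity)
  have hN : 0 < ⌈π / ε⌉₊ := Nat.ceil_pos.2 (by positivity)
  have hNε : π / ε ≤ ⌈π / ε⌉₊ := Nat.le_ceil _
  rw [← hceil, ← hp]
  generalize ⌈π / ε⌉₊ = N at hN hNε
  have hN' : (0 : ℝ) < N := by exact_mod_cast hN
  obtain ⟨j, hj0, hjle, c, hc⟩ :=
    exists_pos_le_forall_abs_sub_sub_le n N hN (fun k => τ * φ k / (2 * π))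
  refine ⟨τ * j, by positivity, ?_, fun ψ hψ => ?_, ?_⟩
  · have hj : (j : ℝ) ≤ N * (2 * N + 1) ^ n := by
      calc (j : ℝ) ≤ N * (2 * N) ^ n := by exact_mod_cast hjle
        _ ≤ N * (2 * N + 1) ^ n := by gcongr; linarith
    rw [Nat.cast_mul, mul_assoc, Nat.add_sub_cancel]
    gcongr
  · have hcos0 : 0 ≤ cos ε := cos_nonneg_of_mem_Icc ⟨by linarith, by linarith [pi_gt_three]⟩
    have hmain : cos ε ≤ ‖star ψ ⬝ᵥ ((U ^ (τ * j)) *ᵥ ψ)‖ := by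
      refine le_norm_star_dotProduct_pow_mulVec U
        ⟨(mem_unitaryGroup_iff'.1 hU).trans (mem_unitaryGroup_iff.1 hU).symm⟩ (τ * j)
        (Complex.exp (((2 * π * c : ℝ) : ℂ) * Complex.I)) (Complex.norm_exp_ofReal_mul_I _)
        (cos ε) ?_ ψ hψ
      rw [hspec]
      rintro _ ⟨k, rfl⟩
      obtain ⟨z, hz⟩ := hc k
      set y := j * (τ * φ k / (2 * π)) - c - z with hy
      have hbound : |2 * π * y| ≤ ε := by
        rw [abs_mul, abs_of_pos (by positivity : 0 < 2 * π)]
        calc 2 * π * |y| ≤ 2 * π * (1 / (2 * N)) := by gcongr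
          _ = π / N := by field_simp
          _ ≤ ε := by rw [div_le_iff₀ hN']; rwa [div_le_iff₀ hε0, mul_comm] at hNε
      have hre : (star (Complex.exp (((2 * π * c : ℝ) : ℂ) * Complex.I)) *
          Complex.exp (Complex.I * φ k) ^ (τ * j)).re = cos (2 * π * y) := by
        rw [RCLike.star_def, ← Complex.exp_conj, ← Complex.exp_nat_mul, ← Complex.exp_add,
          ← cos_add_int_mul_two_pi (2 * π * y) z, ← Complex.exp_ofReal_mul_I_re]
        congr 2
        rw [hy]
        have hπ0 : (π : ℂ) ≠ 0 := by exact_mod_cast hπ.ne'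
        simp only [map_mul, Complex.conj_ofReal, Complex.conj_I]
        push_cast
        field_simp
        ring
      rw [hre, ← cos_abs (2 * π * y)]
      exact cos_le_cos_of_nonneg_of_le_pi (abs_nonneg _) (by linarith [pi_gt_three]) hbound
    have hsq := pow_le_pow_left₀ hcos0 hmain 2
    have hsin : sin ε ^ 2 ≤ ε ^ 2 :=
      pow_le_pow_left₀ (sin_nonneg_of_nonneg_of_le_pi hε0.le (by linarith [pi_gt_three]))
        (sin_le hε0.le) 2
    linarith [sin_sq_add_cos_sq ε]
  · have hne : Complex.exp (Complex.I * φ p.1) ≠ Complex.exp (Complex.I * φ p.2) := by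
      intro h
      obtain ⟨z, hz⟩ := Complex.exp_eq_exp_iff_exists_int.1 h
      have hz' : φ p.1 = φ p.2 + z * (2 * π) := by
        have := congrArg Complex.im hz
        simpa using this
      have : cos (τ * (φ p.1 - φ p.2)) = 1 := by
        rw [hz', ← cos_int_mul_two_pi (τ * z)]
        push_cast
        ring_nf
      linarith
    obtain ⟨χ, hχ, hform⟩ := exists_unit_norm_sq_star_dotProduct_pow_mulVec U hU _ _ hne
      (hspec ▸ Set.mem_range_self p.1) (hspec ▸ Set.mem_range_self p.2)
    refine ⟨χ, hχ, τ, hτ0, Nat.le_mul_of_pos_right τ hj0, ?_⟩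
    rw [hform]
    nlinarith
end

section
/- Let n ≥ 1, let p_1, …, p_n be nonnegative reals with Σ_k p_k = 1, let α_1, …, α_n be real numbers, and let ε ≥ 0. If |α_j − α_k| ≤ 2ε for all j, k, then Σ_{j,k} p_j·p_k·(1 − cos(α_j − α_k)) ≤ ε². -/
/-- The variance of a finitely supported distribution, as half the mean squared difference of two
independent copies, in terms of moments about an arbitrary point `c`. -/
theorem sum_sum_mul_sq_sub_div_two {ι : Type*} [Fintype ι] (p a : ι → ℝ)
    (hp : ∑ i, p i = 1) (c : ℝ) :
    ∑ j, ∑ k, p j * p k * ((a j - a k) ^ 2 / 2) =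
      ∑ i, p i * (a i - c) ^ 2 - (∑ i, p i * (a i - c)) ^ 2 := by
  have expand : ∀ j k, p j * p k * ((a j - a k) ^ 2 / 2) =
      (p j * (a j - c) ^ 2) * p k / 2 + p j * (p k * (a k - c) ^ 2) / 2
        - (p j * (a j - c)) * (p k * (a k - c)) := fun j k => by ring
  simp only [expand, Finset.sum_sub_distrib, Finset.sum_add_distrib, ← Finset.sum_div,
    ← Finset.mul_sum, ← Finset.sum_mul, hp]
  ring

/-- **Popoviciu's inequality** for a finitely supported distribution. -/
theorem sum_sum_mul_sq_sub_div_two_le_sq {ι : Type*} [Fintype ι] [Nonempty ι] (p a : ι → ℝ)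
    (hp : ∀ i, 0 ≤ p i) (hpsum : ∑ i, p i = 1) (ε : ℝ)
    (hclose : ∀ j k, |a j - a k| ≤ 2 * ε) :
    ∑ j, ∑ k, p j * p k * ((a j - a k) ^ 2 / 2) ≤ ε ^ 2 := by
  obtain ⟨m, hm⟩ := Finite.exists_min a
  rw [sum_sum_mul_sq_sub_div_two p a hpsum (a m + ε)]
  have hdev : ∀ i, (a i - (a m + ε)) ^ 2 ≤ ε ^ 2 := fun i =>
    sq_le_sq' (by linarith [hm i]) (by linarith [le_of_abs_le (hclose i m)])
  calc
    _ ≤ ∑ i, p i * (a i - (a m + ε)) ^ 2 := sub_le_self _ (sq_nonneg _)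
    _ ≤ ∑ i, p i * ε ^ 2 :=
      Finset.sum_le_sum fun i _ => mul_le_mul_of_nonneg_left (hdev i) (hp i)
    _ = ε ^ 2 := by rw [← Finset.sum_mul, hpsum, one_mul]

theorem variance_popoviciu_cos_bound
    (n : ℕ) (hn : 1 ≤ n) (p : Fin n → ℝ) (hp : ∀ k, 0 ≤ p k)
    (hpsum : ∑ k, p k = 1) (α : Fin n → ℝ) (ε : ℝ) (hε : 0 ≤ ε)
    (hclose : ∀ j k, |α j - α k| ≤ 2 * ε) :
    ∑ j, ∑ k, p j * p k * (1 - Real.cos (α j - α k)) ≤ ε ^ 2 := by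
  have : Nonempty (Fin n) := ⟨⟨0, hn⟩⟩
  refine le_trans ?_ (sum_sum_mul_sq_sub_div_two_le_sq p α hp hpsum ε hclose)
  refine Finset.sum_le_sum fun j _ => Finset.sum_le_sum fun k _ =>
    mul_le_mul_of_nonneg_left ?_ (mul_nonneg (hp j) (hp k))
  linarith [Real.one_sub_sq_div_two_le_cos (x := α j - α k)]
end

section
/- Let N ≥ 1 and d ≥ 3 be integers. Define 𝒫 ⊆ ℝ^(d−1) as the union of [0, 1/(2N))^(d−1) and [1/(2N), 1/N)^(d−1); define A = { (1/(2N))·Σ_{k=1}^{d−2} n_k e_k : each n_k ∈ {−1, 0, 1, …, 2N−1} } and B = { (k/N)·e_{d−1} : k ∈ {0, 1, …, N−1} }, where e_k are the standard basis vectors of ℝ^(d−1). Then the translates { 𝒫 + a + b : a ∈ A, b ∈ B } are pairwise disjoint, and their union contains the half-open unit cube [0, 1)^(d−1). In particular, the number of translates is |A|·|B| = N·(2N+1)^(d−2). -/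
/-- Membership in the union of two diagonal cubes of side `1 / (2 * N)`, read off from the integer
parts of the coordinates rescaled by `2 * N`. -/
theorem mem_two_cubes_iff_floor {ι : Type*} {N : ℕ} (hN : 1 ≤ N) (z : ι → ℝ) :
    z ∈ {z : ι → ℝ | ∀ i, 0 ≤ z i ∧ z i < 1 / (2 * (N : ℝ))} ∪
        {z | ∀ i, 1 / (2 * (N : ℝ)) ≤ z i ∧ z i < 1 / (N : ℝ)} ↔
      ∃ ε : ℤ, (ε = 0 ∨ ε = 1) ∧ ∀ i, ⌊2 * (N : ℝ) * z i⌋ = ε := by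
  have hN0 : (0 : ℝ) < N := by exact_mod_cast hN
  have lower_cube (t : ℝ) :
      (0 ≤ t ∧ t < 1 / (2 * (N : ℝ))) ↔ ⌊2 * (N : ℝ) * t⌋ = 0 := by
    rw [Int.floor_eq_iff, lt_div_iff₀ (by positivity)]
    constructor
    · rintro ⟨h₀, h₁⟩
      exact ⟨by push_cast; positivity, by push_cast; linarith⟩
    · rintro ⟨h₀, h₁⟩
      push_cast at h₀ h₁
      exact ⟨nonneg_of_mul_nonneg_right h₀ (by positivity), by linarith⟩
  have upper_cube (t : ℝ) :
      (1 / (2 * (N : ℝ)) ≤ t ∧ t < 1 / (N : ℝ)) ↔ ⌊2 * (N : ℝ) * t⌋ = 1 := by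
    rw [Int.floor_eq_iff, lt_div_iff₀ hN0, div_le_iff₀ (by positivity)]
    push_cast
    constructor <;> rintro ⟨h₀, h₁⟩ <;> constructor <;> linarith
  simp only [Set.mem_union, Set.mem_ofPred_eq, lower_cube, upper_cube, or_and_right, exists_or,
    exists_eq_left]

/-- Translating the two diagonal cubes by a vector of the lattice `(1 / (2 * N)) ℤ^ι` shifts the
integer parts of the rescaled coordinates. -/
theorem mem_translate_two_cubes_iff_floor {ι : Type*} {N : ℕ} (hN : 1 ≤ N) {w : ι → ℝ}
    {s : ι → ℤ} (hw : ∀ i, 2 * (N : ℝ) * w i = s i) (x : ι → ℝ) :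
    x ∈ (· + w) '' ({z : ι → ℝ | ∀ i, 0 ≤ z i ∧ z i < 1 / (2 * (N : ℝ))} ∪
        {z | ∀ i, 1 / (2 * (N : ℝ)) ≤ z i ∧ z i < 1 / (N : ℝ)}) ↔
      ∃ ε : ℤ, (ε = 0 ∨ ε = 1) ∧ ∀ i, ⌊2 * (N : ℝ) * x i⌋ = ε + s i := by
  rw [Set.image_add_right, Set.mem_preimage, mem_two_cubes_iff_floor hN]
  simp only [Pi.add_apply, Pi.neg_apply, ← sub_eq_add_neg, mul_sub, hw,
    Int.floor_sub_intCast, sub_eq_iff_eq_add]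

/-- The number of lattice vectors with last coordinate zero and all others in `[-1, 2 * N - 1]`. -/
theorem ncard_scaled_lattice_box {N : ℕ} (hN : 1 ≤ N) (m : ℕ) :
    {a : Fin (m + 1) → ℝ | ∃ n : Fin (m + 1) → ℤ,
        (∀ i, a i = (n i : ℝ) / (2 * N)) ∧
        (∀ i : Fin (m + 1), i.val < m → -1 ≤ n i ∧ n i ≤ 2 * (N : ℤ) - 1) ∧
        (∀ i : Fin (m + 1), i.val = m → n i = 0)}.ncard = (2 * N + 1) ^ m := by
  have hN0 : (N : ℝ) ≠ 0 := by exact_mod_cast (by lia : N ≠ 0)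
  let box : Finset (Fin (m + 1) → ℤ) := Fintype.piFinset fun i =>
    if i.val = m then {0} else Finset.Icc (-1) (2 * (N : ℤ) - 1)
  let scale : (Fin (m + 1) → ℤ) → Fin (m + 1) → ℝ := fun n i => (n i : ℝ) / (2 * N)
  have scale_injective : Function.Injective scale := by
    intro n n' h
    funext i
    have hi := congrFun h i
    simp only [scale] at hi
    field_simp at hi
    exact_mod_cast hi
  have mem_box (n : Fin (m + 1) → ℤ) : n ∈ box ↔
      (∀ i : Fin (m + 1), i.val < m → -1 ≤ n i ∧ n i ≤ 2 * (N : ℤ) - 1) ∧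
      (∀ i : Fin (m + 1), i.val = m → n i = 0) := by
    simp only [box, Fintype.mem_piFinset]
    constructor
    · intro h
      refine ⟨fun i hi => ?_, fun i hi => ?_⟩
      · simpa [hi.ne] using h i
      · simpa [hi] using h i
    · rintro ⟨h₁, h₂⟩ i
      by_cases hi : i.val = m
      · simpa [hi] using h₂ i hi
      · simpa [hi] using h₁ i (by lia)
  have image_eq : {a : Fin (m + 1) → ℝ | ∃ n : Fin (m + 1) → ℤ,
      (∀ i, a i = (n i : ℝ) / (2 * N)) ∧
      (∀ i : Fin (m + 1), i.val < m → -1 ≤ n i ∧ n i ≤ 2 * (N : ℤ) - 1) ∧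
      (∀ i : Fin (m + 1), i.val = m → n i = 0)} = scale '' (box : Set (Fin (m + 1) → ℤ)) := by
    ext a
    simp only [Set.mem_image, Set.mem_ofPred_eq, Finset.mem_coe, mem_box]
    refine exists_congr fun n => ?_
    rw [and_comm, funext_iff]
    exact and_congr_right' (forall_congr' fun i => eq_comm)
  rw [image_eq, Set.ncard_image_of_injective _ scale_injective, Set.ncard_coe_finset,
    Fintype.card_piFinset, Fin.prod_univ_castSucc]
  have card_factor (i : Fin m) : (if (i.castSucc : Fin (m + 1)).val = m then {0}
      else Finset.Icc (-1) (2 * (N : ℤ) - 1)).card = 2 * N + 1 := by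
    rw [if_neg (by simp [i.isLt.ne]), Int.card_Icc]
    lia
  simp only [card_factor]
  simp

/-- There are `N` multiples `(k / N) e` with `k < N` of the last basis vector `e`. -/
theorem ncard_multiples_last {N : ℕ} (hN : 1 ≤ N) (m : ℕ) :
    {b : Fin (m + 1) → ℝ | ∃ k : ℕ, k < N ∧
        ∀ i : Fin (m + 1), b i = if i.val = m then (k : ℝ) / N else 0}.ncard = N := by
  have hN0 : (N : ℝ) ≠ 0 := by exact_mod_cast (by lia : N ≠ 0)
  let multiple : ℕ → Fin (m + 1) → ℝ := fun k i => if i.val = m then (k : ℝ) / N else 0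
  have multiple_injective : Function.Injective multiple := by
    intro k k' h
    have hl := congrFun h (Fin.last m)
    simp only [multiple, Fin.val_last, if_true] at hl
    field_simp at hl
    exact_mod_cast hl
  have image_eq : {b : Fin (m + 1) → ℝ | ∃ k : ℕ, k < N ∧
      ∀ i : Fin (m + 1), b i = if i.val = m then (k : ℝ) / N else 0} =
      multiple '' (Finset.range N : Set ℕ) := by
    ext b
    simp [multiple, funext_iff, eq_comm]
  rw [image_eq, Set.ncard_image_of_injective _ multiple_injective, Set.ncard_coe_finset,
    Finset.card_range]

theorem two_cubes_tiling
    (N d : ℕ) (hN : 1 ≤ N) (hd : 3 ≤ d)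
    (P : Set (Fin (d - 1) → ℝ))
    (hP : P = {z | ∀ i, 0 ≤ z i ∧ z i < 1 / (2 * (N : ℝ))} ∪
              {z | ∀ i, 1 / (2 * (N : ℝ)) ≤ z i ∧ z i < 1 / (N : ℝ)})
    (A : Set (Fin (d - 1) → ℝ))
    (hA : A = {a | ∃ n : Fin (d - 1) → ℤ,
        (∀ i, a i = (n i : ℝ) / (2 * N)) ∧
        (∀ i : Fin (d - 1), i.val < d - 2 → -1 ≤ n i ∧ n i ≤ 2 * (N : ℤ) - 1) ∧
        (∀ i : Fin (d - 1), i.val = d - 2 → n i = 0)})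
    (B : Set (Fin (d - 1) → ℝ))
    (hB : B = {b | ∃ k : ℕ, k < N ∧
        ∀ i : Fin (d - 1), b i = if i.val = d - 2 then (k : ℝ) / N else 0}) :
    (∀ a ∈ A, ∀ b ∈ B, ∀ a' ∈ A, ∀ b' ∈ B, (a, b) ≠ (a', b') →
      Disjoint ((· + (a + b)) '' P) ((· + (a' + b')) '' P)) ∧
    ({x : Fin (d - 1) → ℝ | ∀ i, 0 ≤ x i ∧ x i < 1} ⊆
      ⋃ a ∈ A, ⋃ b ∈ B, (· + (a + b)) '' P) ∧
    A.ncard = (2 * N + 1) ^ (d - 2) ∧ B.ncard = N := by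
  obtain ⟨m, rfl⟩ : ∃ m, d = m + 2 := ⟨d - 2, by lia⟩
  simp only [show m + 2 - 2 = m from rfl] at *
  have hN0 : (N : ℝ) ≠ 0 := by exact_mod_cast (by lia : N ≠ 0)
  have shift {a b : Fin (m + 1) → ℝ} {n : Fin (m + 1) → ℤ} {k : ℕ}
      (ha : ∀ i, a i = (n i : ℝ) / (2 * N))
      (hb : ∀ i : Fin (m + 1), b i = if i.val = m then (k : ℝ) / N else 0) (i : Fin (m + 1)) :
      2 * (N : ℝ) * (a + b) i = ((n i + if i.val = m then 2 * (k : ℤ) else 0 : ℤ) : ℝ) := by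
    rw [Pi.add_apply, ha, hb]
    split_ifs
    · push_cast
      field_simp
    · push_cast
      field_simp
      ring
  subst hP hA hB
  refine ⟨?_, ?_, ncard_scaled_lattice_box hN m, ncard_multiples_last hN m⟩
  · rintro a ⟨n, ha, -, hn⟩ b ⟨k, -, hb⟩ a' ⟨n', ha', -, hn'⟩ b' ⟨k', -, hb'⟩ hne
    rw [Set.disjoint_left]
    intro x hx hx'
    obtain ⟨ε, hε, h⟩ := (mem_translate_two_cubes_iff_floor hN (shift ha hb) x).1 hx
    obtain ⟨ε', hε', h'⟩ := (mem_translate_two_cubes_iff_floor hN (shift ha' hb') x).1 hx'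
    have hl := (h (Fin.last m)).symm.trans (h' (Fin.last m))
    rw [hn _ (Fin.val_last m), hn' _ (Fin.val_last m)] at hl
    simp only [Fin.val_last, if_true] at hl
    obtain rfl : k = k' := by lia
    obtain rfl : ε = ε' := by lia
    apply hne
    refine Prod.ext (funext fun i => ?_) (funext fun i => (hb i).trans (hb' i).symm)
    have hi := (h i).symm.trans (h' i)
    change a i = a' i
    rw [ha, ha', show n i = n' i by lia]
  · intro x hx
    let f : Fin (m + 1) → ℤ := fun i => ⌊2 * (N : ℝ) * x i⌋
    have hNpos : (0 : ℝ) < N := by exact_mod_cast hN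
    have f_nonneg (i : Fin (m + 1)) : 0 ≤ f i :=
      Int.floor_nonneg.2 (mul_nonneg (by positivity) (hx i).1)
    have f_lt (i : Fin (m + 1)) : f i < 2 * (N : ℤ) := by
      refine Int.floor_lt.2 ?_
      push_cast
      nlinarith [(hx i).2]
    let ε : ℤ := f (Fin.last m) % 2
    let k : ℕ := (f (Fin.last m) / 2).toNat
    let n : Fin (m + 1) → ℤ := fun i => if i.val = m then 0 else f i - ε
    have hl₀ := f_nonneg (Fin.last m)
    have hl₁ := f_lt (Fin.last m)
    simp only [Set.mem_iUnion]
    refine ⟨fun i => (n i : ℝ) / (2 * N), ⟨n, fun i => rfl, fun i hi => ?_, fun i hi => ?_⟩,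
      fun i => if i.val = m then (k : ℝ) / N else 0, ⟨k, by lia, fun i => rfl⟩,
      (mem_translate_two_cubes_iff_floor hN (shift (fun i => rfl) fun i => rfl) x).2
        ⟨ε, by lia, fun i => ?_⟩⟩
    · have := f_nonneg i
      have := f_lt i
      simp only [n, if_neg hi.ne]
      lia
    · simp only [n, if_pos hi]
    · change f i = _
      by_cases hi : i.val = m
      · obtain rfl : i = Fin.last m := Fin.ext hi
        simp only [n, if_pos hi]
        lia
      · simp only [n, if_neg hi]
        lia
end

section
/- Let N ≥ 1 and d ≥ 2 be integers. Define 𝒯 = { x ∈ ℝ^(d−1) : −1/(2N) ≤ x_i < 1/(2N) for all i, and −1/(2N) ≤ x_j − x_i < 1/(2N) for all j > i }, and for each i ∈ {1, …, d−1} let v^(i) ∈ ℝ^(d−1) be the vector whose i-th component is 2 and whose other components are all 1. Then for every x ∈ ℝ^(d−1) there exists a unique tuple of integers (n_1, …, n_{d−1}) such that x − (1/(2N))·Σ_i n_i v^(i) ∈ 𝒯. -/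
/-- All differences `z j - z i` with `i < j` lie in `[-1, 1)`. -/
def HasUnitSpread {ι : Type*} [LinearOrder ι] (z : ι → ℝ) : Prop :=
  ∀ i j, i < j → -1 ≤ z j - z i ∧ z j - z i < 1

namespace HasUnitSpread

variable {ι : Type*} [LinearOrder ι]

theorem exists_update_sub_one [Finite ι] [Nonempty ι] {z : ι → ℝ} (hz : HasUnitSpread z) :
    ∃ a, HasUnitSpread (Function.update z a (z a - 1)) := by
  obtain ⟨a, ha⟩ := Finite.exists_max fun i => toLex (z i, i)
  refine ⟨a, fun i j hij => ?_⟩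
  have hi := ha i
  have hj := ha j
  have h := hz i j hij
  simp only [Prod.Lex.toLex_le_toLex] at hi hj
  rcases eq_or_ne i a with rfl | hia
  · rw [Function.update_self, Function.update_of_ne hij.ne']
    rcases hj with hj | ⟨-, hj⟩
    · constructor <;> linarith
    · exact absurd hij hj.not_gt
  · rw [Function.update_of_ne hia]
    rcases eq_or_ne j a with rfl | hja
    · rw [Function.update_self]
      rcases hi with hi | ⟨hi, -⟩ <;> constructor <;> linarith
    · rwa [Function.update_of_ne hja]

theorem exists_update_add_one [Finite ι] [Nonempty ι] {z : ι → ℝ} (hz : HasUnitSpread z) :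
    ∃ a, HasUnitSpread (Function.update z a (z a + 1)) := by
  obtain ⟨a, ha⟩ := Finite.exists_min fun i => toLex (z i, i)
  refine ⟨a, fun i j hij => ?_⟩
  have hi := ha i
  have hj := ha j
  have h := hz i j hij
  simp only [Prod.Lex.toLex_le_toLex] at hi hj
  rcases eq_or_ne i a with rfl | hia
  · rw [Function.update_self, Function.update_of_ne hij.ne']
    rcases hj with hj | ⟨hj, -⟩ <;> constructor <;> linarith
  · rw [Function.update_of_ne hia]
    rcases eq_or_ne j a with rfl | hja
    · rw [Function.update_self]
      rcases hi with hi | ⟨-, hi⟩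
      · constructor <;> linarith
      · exact absurd hij hi.not_gt
    · rwa [Function.update_of_ne hja]

theorem exists_int_sum_eq [Fintype ι] [Nonempty ι] (y : ι → ℝ) (s : ℤ) :
    ∃ n : ι → ℤ, ∑ i, n i = s ∧ HasUnitSpread fun i => y i - n i := by
  induction s using Int.inductionOn' (b := ∑ i, ⌊y i⌋) with
  | zero =>
    refine ⟨fun i => ⌊y i⌋, rfl, fun i j _ => ?_⟩
    have := Int.floor_le (y i)
    have := Int.floor_le (y j)
    have := Int.lt_floor_add_one (y i)
    have := Int.lt_floor_add_one (y j)
    constructor <;> linarith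
  | succ k _ ih =>
    obtain ⟨n, hn, hz⟩ := ih
    obtain ⟨a, ha⟩ := hz.exists_update_sub_one
    refine ⟨n + Pi.single a 1, by simp [Finset.sum_add_distrib, hn], ?_⟩
    convert ha using 1
    ext i
    rcases eq_or_ne i a with rfl | h
    · simp [sub_sub]
    · simp [h]
  | pred k _ ih =>
    obtain ⟨n, hn, hz⟩ := ih
    obtain ⟨a, ha⟩ := hz.exists_update_add_one
    refine ⟨n - Pi.single a 1, by simp [Finset.sum_sub_distrib, hn], ?_⟩
    convert ha using 1
    ext i
    rcases eq_or_ne i a with rfl | h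
    · simp [sub_add]
    · simp [h]

theorem int_eq_of_sum_eq [Fintype ι] {y : ι → ℝ} {n n' : ι → ℤ}
    (hn : HasUnitSpread fun i => y i - n i) (hn' : HasUnitSpread fun i => y i - n' i)
    (hsum : ∑ i, n i = ∑ i, n' i) : n = n' := by
  by_contra hne
  obtain ⟨c, hc⟩ := Function.ne_iff.mp hne
  have hlt : ∃ a, n a < n' a := by
    by_contra! h
    exact hc ((Finset.sum_eq_sum_iff_of_le fun i _ => h i).mp hsum.symm c (Finset.mem_univ c)).symm
  have hgt : ∃ b, n' b < n b := by
    by_contra! h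
    exact hc ((Finset.sum_eq_sum_iff_of_le fun i _ => h i).mp hsum c (Finset.mem_univ c))
  obtain ⟨a, ha⟩ := hlt
  obtain ⟨b, hb⟩ := hgt
  have ha' : (n a : ℝ) + 1 ≤ n' a := by exact_mod_cast ha
  have hb' : (n' b : ℝ) + 1 ≤ n b := by exact_mod_cast hb
  rcases lt_trichotomy a b with hab | rfl | hab
  · have h₁ := hn a b hab
    have h₂ := hn' a b hab
    linarith
  · exact lt_asymm ha hb
  · have h₁ := hn b a hab
    have h₂ := hn' b a hab
    linarith

theorem existsUnique_int_sum_eq [Fintype ι] [Nonempty ι] (y : ι → ℝ) (s : ℤ) :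
    ∃! n : ι → ℤ, ∑ i, n i = s ∧ HasUnitSpread fun i => y i - n i := by
  obtain ⟨n, hs, hn⟩ := exists_int_sum_eq y s
  exact ⟨n, ⟨hs, hn⟩, fun n' hn' => int_eq_of_sum_eq hn'.2 hn (hn'.1.trans hs.symm)⟩

theorem fin_cons_iff {m : ℕ} (z₀ : ℝ) (z : Fin m → ℝ) :
    HasUnitSpread (Fin.cons z₀ z : Fin (m + 1) → ℝ) ↔
      (∀ i, -1 ≤ z i - z₀ ∧ z i - z₀ < 1) ∧ HasUnitSpread z := by
  simp [HasUnitSpread, Fin.forall_fin_succ]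

end HasUnitSpread

theorem neg_le_and_lt_iff_of_eq_mul {c u w : ℝ} (hc : 0 < c) (h : u = c * w) :
    (-c ≤ u ∧ u < c) ↔ (-1 ≤ w ∧ w < 1) := by
  subst h
  constructor <;> rintro ⟨h₁, h₂⟩ <;> constructor <;> nlinarith

theorem polytope_tiles_space
    (N d : ℕ) (hN : 1 ≤ N) (hd : 2 ≤ d)
    (T : Set (Fin (d - 1) → ℝ))
    (hT : T = {x | (∀ i, -(1 / (2 * (N : ℝ))) ≤ x i ∧ x i < 1 / (2 * (N : ℝ))) ∧
        (∀ i j : Fin (d - 1), i < j →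
          -(1 / (2 * (N : ℝ))) ≤ x j - x i ∧ x j - x i < 1 / (2 * (N : ℝ)))})
    (v : Fin (d - 1) → (Fin (d - 1) → ℝ))
    (hv : ∀ i j, v i j = if j = i then 2 else 1) :
    ∀ x : Fin (d - 1) → ℝ, ∃! n : Fin (d - 1) → ℤ,
      (x - (1 / (2 * (N : ℝ))) • ∑ i, (n i : ℝ) • v i) ∈ T := by
  intro x
  have hc : 0 < 1 / (2 * (N : ℝ)) := by positivity
  generalize 1 / (2 * (N : ℝ)) = c at *
  generalize d - 1 = m at *
  have hcoord (n : Fin m → ℤ) (j : Fin m) :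
      (x - c • ∑ i, (n i : ℝ) • v i) j = c * (x j / c - n j - ∑ i, (n i : ℝ)) := by
    have hsum : ∑ i, (n i : ℝ) * v i j = n j + ∑ i, (n i : ℝ) := by
      have (i : Fin m) : (n i : ℝ) * v i j = (if j = i then (n i : ℝ) else 0) + n i := by
        rw [hv]
        split_ifs <;> ring
      simp [this, Finset.sum_add_distrib]
    simp only [Pi.sub_apply, Pi.smul_apply, Finset.sum_apply, smul_eq_mul, hsum]
    field_simp
    ring
  let y : Fin (m + 1) → ℝ := Fin.cons 0 fun j => x j / c
  have hmem (n : Fin m → ℤ) : (x - c • ∑ i, (n i : ℝ) • v i) ∈ T ↔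
      HasUnitSpread fun i => y i - ((Fin.cons (-∑ i, n i) n : Fin (m + 1) → ℤ) i : ℝ) := by
    have hcons : (fun i => y i - ((Fin.cons (-∑ i, n i) n : Fin (m + 1) → ℤ) i : ℝ)) =
        Fin.cons (∑ i, (n i : ℝ)) fun j => x j / c - n j := by
      ext i
      cases i using Fin.cases <;> simp [y]
    rw [hcons, HasUnitSpread.fin_cons_iff, hT]
    refine and_congr (forall_congr' fun i => neg_le_and_lt_iff_of_eq_mul hc (hcoord n i))
      (forall₃_congr fun i j _ => neg_le_and_lt_iff_of_eq_mul hc ?_)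
    rw [hcoord, hcoord]
    ring
  obtain ⟨n, ⟨hs, hn⟩, huniq⟩ := HasUnitSpread.existsUnique_int_sum_eq y 0
  have hn_cons : (Fin.cons (-∑ i, Fin.tail n i) (Fin.tail n) : Fin (m + 1) → ℤ) = n := by
    rw [Fin.sum_univ_succ] at hs
    rw [show -∑ i, Fin.tail n i = n 0 by simp only [Fin.tail]; linarith, Fin.cons_self_tail]
  refine ⟨Fin.tail n, (hmem _).mpr (by rwa [hn_cons]), fun n' hn' => ?_⟩
  rw [← huniq _ ⟨by simp [Fin.sum_univ_succ], (hmem n').mp hn'⟩, Fin.tail_cons]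
end

section
/- Let D ≥ 1 be an integer and s > 0 a real number, and define 𝒯_s^(D) = { x ∈ ℝ^D : |x_i| ≤ s for all i, and |x_i − x_j| ≤ s for all i, j }. Then the D-dimensional Lebesgue measure of 𝒯_s^(D) equals (D+1)·s^D. -/
open MeasureTheory

/-- The linear involution of `ℝ^ι` that negates the `i`-th coordinate and subtracts it from all
the others. -/
def reflectShear {ι : Type*} [DecidableEq ι] (i : ι) : (ι → ℝ) →ₗ[ℝ] (ι → ℝ) where
  toFun x j := if j = i then -x i else x j - x i
  map_add' x y := by
    ext j
    simp only [Pi.add_apply]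
    split_ifs <;> ring
  map_smul' c x := by
    ext j
    simp only [Pi.smul_apply, smul_eq_mul, RingHom.id_apply]
    split_ifs <;> ring

section reflectShear

variable {ι : Type*} [DecidableEq ι]

lemma reflectShear_apply (i : ι) (x : ι → ℝ) (j : ι) :
    reflectShear i x j = if j = i then -x i else x j - x i := rfl

lemma reflectShear_comp_self (i : ι) : reflectShear i ∘ₗ reflectShear i = LinearMap.id := by
  ext x j
  simp only [LinearMap.comp_apply, LinearMap.id_apply, reflectShear_apply]
  split_ifs with h <;> simp [h]

lemma abs_det_reflectShear (i : ι) : |LinearMap.det (reflectShear i)| = 1 := by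
  have h := congrArg LinearMap.det (reflectShear_comp_self i)
  rw [LinearMap.det_comp, LinearMap.det_id, ← sq] at h
  exact (pow_eq_one_iff_of_nonneg (abs_nonneg _) two_ne_zero).1 (by rwa [sq_abs])

/-- The cube `[0, s]^ι` together with its preimages under the maps `reflectShear i`: the pieces of
the polytope on which the least element of `{0} ∪ {x i}` is `0`, respectively `x i`. -/
def polytopePiece (ι : Type*) [DecidableEq ι] (s : ℝ) : Option ι → Set (ι → ℝ)
  | none => Set.Icc 0 fun _ => s
  | some i => reflectShear i ⁻¹' Set.Icc 0 fun _ => s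

lemma mem_polytopePiece_none {s : ℝ} {x : ι → ℝ} :
    x ∈ polytopePiece ι s none ↔ ∀ j, 0 ≤ x j ∧ x j ≤ s := by
  simp [polytopePiece, Pi.le_def, forall_and]

lemma mem_polytopePiece_some {s : ℝ} {x : ι → ℝ} {i : ι} :
    x ∈ polytopePiece ι s (some i) ↔
      (-s ≤ x i ∧ x i ≤ 0) ∧ ∀ j, j ≠ i → x i ≤ x j ∧ x j ≤ x i + s := by
  simp only [polytopePiece, Set.mem_preimage, Set.mem_Icc, Pi.le_def, reflectShear_apply,
    Pi.zero_apply, ← forall_and]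
  constructor
  · intro h
    refine ⟨?_, fun j hj => ?_⟩
    · have := h i
      simp only [if_true] at this
      constructor <;> linarith
    · have := h j
      simp only [hj, if_false] at this
      constructor <;> linarith
  · rintro ⟨h, h'⟩ j
    split_ifs with hj
    · constructor <;> linarith
    · have := h' j hj
      constructor <;> linarith

variable [Fintype ι]

lemma volume_preimage_reflectShear (i : ι) (A : Set (ι → ℝ)) :
    volume (reflectShear i ⁻¹' A) = volume A := by
  have h := abs_det_reflectShear i
  rw [Measure.addHaar_preimage_linearMap volume (fun h0 => by simp [h0] at h), abs_inv, h]
  simp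

lemma volume_polytopePiece (s : ℝ) (o : Option ι) :
    volume (polytopePiece ι s o) = ENNReal.ofReal s ^ Fintype.card ι := by
  cases o <;> simp [polytopePiece, volume_preimage_reflectShear, Real.volume_Icc_pi]

lemma measurableSet_polytopePiece (s : ℝ) (o : Option ι) :
    MeasurableSet (polytopePiece ι s o) := by
  cases o with
  | none => exact measurableSet_Icc
  | some i => exact (reflectShear i).continuous_of_finiteDimensional.measurable measurableSet_Icc

lemma pairwise_aedisjoint_polytopePiece (s : ℝ) :
    Pairwise (Function.onFun (AEDisjoint volume) (polytopePiece ι s)) := by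
  have hyp (i : ι) : volume {x : ι → ℝ | x i = 0} = 0 :=
    Measure.pi_hyperplane (fun _ : ι => (volume : Measure ℝ)) i 0
  have hnone (i : ι) : AEDisjoint volume (polytopePiece ι s none) (polytopePiece ι s (some i)) := by
    refine measure_mono_null ?_ (hyp i)
    rintro x ⟨h, h'⟩
    exact le_antisymm (mem_polytopePiece_some.1 h').1.2 (mem_polytopePiece_none.1 h i).1
  rintro (_ | i) (_ | j) hij
  · exact absurd rfl hij
  · exact hnone j
  · exact (hnone i).symm
  · have hne : j ≠ i := fun h => hij (by rw [h])
    refine measure_mono_null ?_ ((volume_preimage_reflectShear i _).trans (hyp j))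
    rintro x ⟨h, h'⟩
    have h₁ := ((mem_polytopePiece_some.1 h).2 j hne).1
    have h₂ := ((mem_polytopePiece_some.1 h').2 i hne.symm).1
    simp only [Set.mem_preimage, Set.mem_ofPred_eq, reflectShear_apply, hne, if_false]
    linarith

lemma iUnion_polytopePiece (s : ℝ) :
    ⋃ o, polytopePiece ι s o = {x | (∀ i, |x i| ≤ s) ∧ ∀ i j, |x i - x j| ≤ s} := by
  ext x
  simp only [Set.mem_iUnion, Set.mem_ofPred_eq, abs_le]
  constructor
  · rintro ⟨_ | i, h⟩
    · rw [mem_polytopePiece_none] at h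
      refine ⟨fun j => ?_, fun j k => ?_⟩
      · have := h j
        constructor <;> linarith
      · have := h j
        have := h k
        constructor <;> linarith
    · obtain ⟨h₀, h₁⟩ := mem_polytopePiece_some.1 h
      have h₂ (j : ι) : x i ≤ x j ∧ x j ≤ x i + s := by
        by_cases hj : j = i
        · subst hj
          constructor <;> linarith
        · exact h₁ j hj
      refine ⟨fun j => ?_, fun j k => ?_⟩
      · have := h₂ j
        constructor <;> linarith
      · have := h₂ j
        have := h₂ k
        constructor <;> linarith
  · rintro ⟨h, h'⟩
    by_cases hx : ∀ j, 0 ≤ x j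
    · exact ⟨none, mem_polytopePiece_none.2 fun j => ⟨hx j, (h j).2⟩⟩
    · push Not at hx
      obtain ⟨k, hk⟩ := hx
      have : Nonempty ι := ⟨k⟩
      obtain ⟨i, hi⟩ := Finite.exists_min x
      refine ⟨some i, mem_polytopePiece_some.2
        ⟨⟨(h i).1, (hi k).trans hk.le⟩, fun j _ => ⟨hi j, ?_⟩⟩⟩
      linarith [(h' j i).2]

end reflectShear

theorem volume_polytope
    (D : ℕ) (hD : 1 ≤ D) (s : ℝ) (hs : 0 < s)
    (T : Set (Fin D → ℝ))
    (hT : T = {x | (∀ i, |x i| ≤ s) ∧ ∀ i j : Fin D, |x i - x j| ≤ s}) :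
    volume T = ENNReal.ofReal ((D + 1) * s ^ D) := by
  rw [hT, ← iUnion_polytopePiece, measure_iUnion₀ (pairwise_aedisjoint_polytopePiece s)
    fun o => (measurableSet_polytopePiece s o).nullMeasurableSet, tsum_fintype]
  simp only [volume_polytopePiece, Finset.sum_const, Finset.card_univ, Fintype.card_option,
    Fintype.card_fin, nsmul_eq_mul]
  rw [ENNReal.ofReal_mul (by positivity), ENNReal.ofReal_pow hs.le]
  congr 1
  exact_mod_cast (ENNReal.ofReal_natCast (D + 1)).symm
end

section
/- Let d ≥ 2 and M ≥ 1 be integers, let N be a positive integer, let α_1, …, α_d be real numbers, and suppose there exist sets R_1, …, R_M ⊆ ℝ^(d−1) whose union contains [0, 1)^(d−1) and such that for each m, any two points z, y ∈ R_m satisfy |z_i − y_i| < 1/N and |(z_i − y_i) − (z_j − y_j)| < 1/N for all i, j ∈ {1, …, d−1}. Then there exist an integer q with 1 ≤ q ≤ M and integers l_1, …, l_d such that |(α_i − α_j)·q − (l_i − l_j)| < 1/N for all i, j ∈ {1, …, d}. -/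
theorem pigeonhole_cover_approx
    (d M : ℕ) (hd : 2 ≤ d) (hM : 1 ≤ M) (N : ℕ) (hN : 0 < N)
    (α : Fin d → ℝ)
    (R : Fin M → Set (Fin (d - 1) → ℝ))
    (hcover : {x : Fin (d - 1) → ℝ | ∀ i, 0 ≤ x i ∧ x i < 1} ⊆ ⋃ m, R m)
    (hcell : ∀ m, ∀ z ∈ R m, ∀ y ∈ R m, ∀ i j : Fin (d - 1),
      |z i - y i| < 1 / N ∧ |(z i - y i) - (z j - y j)| < 1 / N) :
    ∃ (q : ℤ) (l : Fin d → ℤ), 1 ≤ q ∧ q ≤ M ∧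
      ∀ i j : Fin d, |(α i - α j) * q - (l i - l j)| < 1 / N := by
  obtain ⟨n, rfl⟩ : ∃ n, d = n + 1 := ⟨d - 1, by omega⟩
  change Fin M → Set (Fin n → ℝ) at R
  let x : Fin (M + 1) → Fin n → ℝ := fun m i => Int.fract ((α i.succ - α 0) * (m : ℕ))
  have hx : ∀ m, ∃ k, x m ∈ R k := fun m =>
    Set.mem_iUnion.1 (hcover fun i => ⟨Int.fract_nonneg _, Int.fract_lt_one _⟩)
  choose c hc using hx
  obtain ⟨a, b, hab, hcab⟩ : ∃ a b, a < b ∧ c a = c b := by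
    obtain ⟨a, b, hne, h⟩ := Fintype.exists_ne_map_eq_of_card_lt c (by simp)
    rcases hne.lt_or_gt with hlt | hlt
    exacts [⟨a, b, hlt, h⟩, ⟨b, a, hlt, h.symm⟩]
  have hclose := hcell (c b) (x b) (hc b) (x a) (hcab ▸ hc a)
  let l : Fin (n + 1) → ℤ := Fin.cons 0 fun i =>
    ⌊(α i.succ - α 0) * (b : ℕ)⌋ - ⌊(α i.succ - α 0) * (a : ℕ)⌋
  have hl_zero : l 0 = 0 := rfl
  have hl_succ : ∀ i : Fin n,
      (α i.succ - α 0) * (((b : ℕ) : ℝ) - (a : ℕ)) - l i.succ = x b i - x a i := by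
    intro i
    simp only [l, x, Fin.cons_succ, Int.fract]
    push_cast
    ring
  refine ⟨(b : ℕ) - (a : ℕ), l, by omega, by omega, fun i j => ?_⟩
  push_cast
  induction i using Fin.cases with
  | zero =>
    induction j using Fin.cases with
    | zero => simpa using hN
    | succ j =>
      have h := (hclose j j).1
      rw [← hl_succ, abs_sub_comm] at h
      convert h using 2
      rw [hl_zero]
      push_cast
      ring
  | succ i =>
    induction j using Fin.cases with
    | zero =>
      have h := (hclose i i).1
      rw [← hl_succ] at h
      simpa [hl_zero] using h
    | succ j =>
      have h := (hclose i j).2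
      rw [← hl_succ, ← hl_succ] at h
      convert h using 2
      ring
end
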